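/- arXiv:1704.07231 — 3 statements merged into one kernel-verified Lean document; each statement's English description precedes it below -/
import Mathlib

section
/- Let M be a quadratic module of ℝ[X_1,…,X_n]. Then the following are equivalent: (a) there are m ∈ ℕ and a tuple g = (g_1,…,g_m) of polynomials such that S(g) is compact and the product ∏_{i∈I} g_i lies in M for every subset I ⊆ {1,…,m}; (b) there is some g ∈ M such that S(g) = {x ∈ ℝ^n : g(x) ≥ 0} is compact; (c) M is Archimedean. -/
open MvPolynomial

noncomputable section

/-- `S(g) = {x ∈ ℝⁿ : g₁(x) ≥ 0, …, g_m(x) ≥ 0}`. -/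
def SolSet {n m : ℕ} (g : Fin m → MvPolynomial (Fin n) ℝ) : Set (Fin n → ℝ) :=
  {x | ∀ i, 0 ≤ eval x (g i)}

/-- `M` is a quadratic module of `ℝ[X₁,…,X_n]`. -/
def IsQuadraticModule {n : ℕ} (M : Set (MvPolynomial (Fin n) ℝ)) : Prop :=
  1 ∈ M ∧ (∀ p ∈ M, ∀ q ∈ M, p + q ∈ M) ∧
    ∀ p : MvPolynomial (Fin n) ℝ, ∀ q ∈ M, p ^ 2 * q ∈ M

/-- A quadratic module is Archimedean if for every polynomial `p` there is `N ∈ ℕ`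
with `N - p ∈ M`. -/
def IsArchimedeanQM {n : ℕ} (M : Set (MvPolynomial (Fin n) ℝ)) : Prop :=
  ∀ p : MvPolynomial (Fin n) ℝ, ∃ N : ℕ, (N : MvPolynomial (Fin n) ℝ) - p ∈ M

/-!
If `M` contains all products of a tuple `g`, it contains the preordering `T` generated by `g`. When
`S(g)` is compact, `N - ∑ Xᵢ²` is positive on it for some `N`, and the Krivine–Stengle
Positivstellensatz gives `s, t ∈ T` with `(N - ∑ Xᵢ²) t = 1 + s`. Wörmann's trick turns this into
`N' - ∑ Xᵢ² ∈ T ⊆ M`, which suffices because the elements bounded with respect to `M` form a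
subalgebra: it contains every `Xᵢ`, hence all polynomials.

The Positivstellensatz needs a point of `ℝⁿ` realizing the sign conditions that a given ordering of
`ℝ[X₁, …, Xₙ]` imposes on finitely many polynomials. The ordering comes from a homomorphism to a
real closed field `R`, and the sign conditions are transferred from `R` to `ℝ` one variable at a
time. For this, pass to a maximal ordered field `E` common to `R` and an ultrapower of `ℝ`: every
root of a polynomial over `E` then lies in `E`, so the signs of polynomials over `E` at a point of
`R` depend only on the cut that this point defines in `E`, and finitely many of them are also
attained at a point of `E`.
-/

section Orderings

variable {A : Type*} [CommRing A]

/-- The preordering generated by a submonoid `S`: sums of elements of the form `s * x ^ 2` with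
`s ∈ S`. It is only a subsemiring, since it may contain `-1`. -/
def preorderingClosure (S : Submonoid A) : Subsemiring A :=
  (S ⊔ Submonoid.square A).subsemiringClosure

lemma mul_sq_mem_preorderingClosure {S : Submonoid A} {s : A} (hs : s ∈ S) (x : A) :
    s * x ^ 2 ∈ preorderingClosure S := by
  rw [← SetLike.mem_coe, preorderingClosure, Submonoid.subsemiringClosure_coe]
  exact AddSubmonoid.subset_closure (Submonoid.mul_mem_sup hs ⟨x, sq x⟩)

lemma mem_preorderingClosure_of_mem {S : Submonoid A} {s : A} (hs : s ∈ S) :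
    s ∈ preorderingClosure S := by
  simpa using mul_sq_mem_preorderingClosure hs 1

lemma sq_mem_preorderingClosure (S : Submonoid A) (x : A) : x ^ 2 ∈ preorderingClosure S := by
  simpa using mul_sq_mem_preorderingClosure S.one_mem x

lemma preorderingClosure_induction {S : Submonoid A} {motive : A → Prop}
    (mul_sq : ∀ s ∈ S, ∀ x, motive (s * x ^ 2)) (zero : motive 0)
    (add : ∀ a b, motive a → motive b → motive (a + b)) {a : A}
    (ha : a ∈ preorderingClosure S) : motive a := by
  rw [← SetLike.mem_coe, preorderingClosure, Submonoid.subsemiringClosure_coe] at ha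
  induction ha using AddSubmonoid.closure_induction with
  | mem y hy =>
    obtain ⟨s, hs, _, ⟨x, rfl⟩, rfl⟩ := Submonoid.mem_sup.1 hy
    simpa [sq] using mul_sq s hs x
  | zero => exact zero
  | add a b _ _ iha ihb => exact add a b iha ihb

/-- The subsemiring `T + a T` generated by a preordering `T` and an element `a`. -/
def adjoinElement (T : Subsemiring A) (hT : ∀ x, x ^ 2 ∈ T) (a : A) : Subsemiring A where
  carrier := {z | ∃ s ∈ T, ∃ t ∈ T, z = s + a * t}
  zero_mem' := ⟨0, T.zero_mem, 0, T.zero_mem, by simp⟩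
  one_mem' := ⟨1, T.one_mem, 0, T.zero_mem, by simp⟩
  add_mem' := by
    rintro _ _ ⟨s, hs, t, ht, rfl⟩ ⟨s', hs', t', ht', rfl⟩
    exact ⟨s + s', add_mem hs hs', t + t', add_mem ht ht', by ring⟩
  mul_mem' := by
    rintro _ _ ⟨s, hs, t, ht, rfl⟩ ⟨s', hs', t', ht', rfl⟩
    exact ⟨s * s' + a ^ 2 * (t * t'), add_mem (mul_mem hs hs') (mul_mem (hT a) (mul_mem ht ht')),
      s * t' + s' * t, add_mem (mul_mem hs ht') (mul_mem hs' ht), by ring⟩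

lemma le_adjoinElement (T : Subsemiring A) (hT : ∀ x, x ^ 2 ∈ T) (a : A) :
    T ≤ adjoinElement T hT a := fun s hs => ⟨s, hs, 0, T.zero_mem, by simp⟩

lemma self_mem_adjoinElement (T : Subsemiring A) (hT : ∀ x, x ^ 2 ∈ T) (a : A) :
    a ∈ adjoinElement T hT a := ⟨0, T.zero_mem, 1, T.one_mem, by simp⟩

lemma exists_maximal_neg_one_notMem {T : Subsemiring A} (hT : ∀ x, x ^ 2 ∈ T) (hneg : -1 ∉ T) :
    ∃ P, T ≤ P ∧ Maximal (fun P : Subsemiring A => (∀ x, x ^ 2 ∈ P) ∧ -1 ∉ P) P := by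
  refine zorn_le_nonempty₀ {P : Subsemiring A | (∀ x, x ^ 2 ∈ P) ∧ -1 ∉ P} ?_ T ⟨hT, hneg⟩
  intro c hc hchain P hP
  have mem_sSup {x : A} : x ∈ sSup c ↔ ∃ Q ∈ c, x ∈ Q :=
    Subsemiring.mem_sSup_of_directedOn ⟨P, hP⟩ hchain.directedOn
  refine ⟨sSup c, ⟨fun x => mem_sSup.2 ⟨P, hP, (hc hP).1 x⟩, fun h => ?_⟩, fun _ => le_sSup⟩
  obtain ⟨Q, hQ, hmem⟩ := mem_sSup.1 h
  exact (hc hQ).2 hmem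

theorem exists_isOrdering_ge {T : Subsemiring A} (hT : ∀ x, x ^ 2 ∈ T) (hneg : -1 ∉ T) :
    ∃ O : RingPreordering A, T ≤ O.toSubsemiring ∧ O.IsOrdering := by
  obtain ⟨P, hTP, ⟨hsq, hP⟩, hmax⟩ := exists_maximal_neg_one_notMem hT hneg
  have neg_one_eq {a : A} (ha : a ∉ P) : ∃ s ∈ P, ∃ t ∈ P, -1 = s + a * t := by
    by_contra hcon
    have hle := hmax (y := adjoinElement P hsq a)
      ⟨fun x => le_adjoinElement P hsq a (hsq x), hcon⟩ (le_adjoinElement P hsq a)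
    exact ha (hle (self_mem_adjoinElement P hsq a))
  let O : RingPreordering A := ⟨P, by rintro _ ⟨x, rfl⟩; simpa [sq] using hsq x, hP⟩
  refine ⟨O, hTP, RingPreordering.isOrdering_iff.2 fun a b hab => ?_⟩
  by_contra! hcon
  obtain ⟨s, hs, t, ht, hst⟩ := neg_one_eq hcon.1
  obtain ⟨s', hs', t', ht', hst'⟩ := neg_one_eq hcon.2
  have key : (-1 : A) = s + s' + s * s' + -(a * b) * (t * t') := by
    linear_combination (1 + s') * hst - a * t * hst'
  refine hP (key ▸ ?_)
  exact add_mem (add_mem (add_mem hs hs') (mul_mem hs hs')) (mul_mem hab (mul_mem ht ht'))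

end Orderings

section AdjoinRoot

variable {K : Type*} [Field K] [LinearOrder K] [IsStrictOrderedRing K]

variable (K) in
/-- The preordering of `K[X]` generated by the nonnegative constants. -/
def weightedSumSq : Subsemiring (Polynomial K) :=
  preorderingClosure ((Subsemiring.nonneg K).toSubmonoid.map Polynomial.C)

lemma C_mul_sq_mem_weightedSumSq {c : K} (hc : 0 ≤ c) (h : Polynomial K) :
    Polynomial.C c * h ^ 2 ∈ weightedSumSq K :=
  mul_sq_mem_preorderingClosure (Submonoid.mem_map_of_mem Polynomial.C hc) h

lemma weightedSumSq_induction {motive : Polynomial K → Prop}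
    (C_mul_sq : ∀ c, 0 ≤ c → ∀ h, motive (Polynomial.C c * h ^ 2)) (zero : motive 0)
    (add : ∀ s t, motive s → motive t → motive (s + t)) {s : Polynomial K}
    (hs : s ∈ weightedSumSq K) : motive s := by
  refine preorderingClosure_induction ?_ zero add hs
  rintro _ ⟨c, hc, rfl⟩ h
  exact C_mul_sq c hc h

lemma eval_nonneg_of_mem_weightedSumSq {s : Polynomial K} (hs : s ∈ weightedSumSq K) (a : K) :
    0 ≤ s.eval a := by
  refine weightedSumSq_induction (motive := fun s => 0 ≤ s.eval a)
    (fun c hc h => ?_) ?_ (fun s t hs ht => ?_) hs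
  · simpa using mul_nonneg hc (sq_nonneg (h.eval a))
  · simp
  · simpa using add_nonneg hs ht

lemma exists_mem_weightedSumSq_dvd_sub {p : Polynomial K} (hp : p.natDegree ≠ 0)
    {s : Polynomial K} (hs : s ∈ weightedSumSq K) :
    ∃ r ∈ weightedSumSq K, p ∣ s - r ∧ r.natDegree + 2 ≤ 2 * p.natDegree := by
  refine weightedSumSq_induction (motive := fun s => ∃ r ∈ weightedSumSq K,
    p ∣ s - r ∧ r.natDegree + 2 ≤ 2 * p.natDegree) (fun c hc h => ?_) ?_ ?_ hs
  · refine ⟨_, C_mul_sq_mem_weightedSumSq hc (h % p),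
      ⟨Polynomial.C c * (h / p) * (h + h % p), ?_⟩, ?_⟩
    · linear_combination (-Polynomial.C c * (h + h % p)) * EuclideanDomain.div_add_mod h p
    · have hmod := Polynomial.natDegree_mod_lt h hp
      have hmul := Polynomial.natDegree_C_mul_le c ((h % p) ^ 2)
      rw [Polynomial.natDegree_pow] at hmul
      omega
  · exact ⟨0, zero_mem _, by simp, by simp only [Polynomial.natDegree_zero]; omega⟩
  · rintro s t ⟨r, hr, hrs, hrdeg⟩ ⟨q, hq, hqt, hqdeg⟩
    refine ⟨r + q, add_mem hr hq, by simpa [add_sub_add_comm] using dvd_add hrs hqt, ?_⟩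
    have := Polynomial.natDegree_add_le r q
    omega

/- Reducing `s` modulo `p` gives `1 + s = p q` with `deg q < deg p`; as `1 + s` is positive at both
points, `q` again changes sign, which permits induction on the degree. -/
theorem not_dvd_one_add_of_mem_weightedSumSq {a b : K} (p : Polynomial K)
    (hp : p.eval a * p.eval b < 0) {s : Polynomial K} (hs : s ∈ weightedSumSq K) :
    ¬ p ∣ 1 + s := by
  induction hd : p.natDegree using Nat.strong_induction_on generalizing p s with
  | _ d ih =>
  subst hd
  intro hdvd
  have hdeg : p.natDegree ≠ 0 := by
    intro h
    rw [Polynomial.eq_C_of_natDegree_eq_zero h, Polynomial.eval_C, Polynomial.eval_C] at hp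
    exact hp.not_ge (mul_self_nonneg _)
  obtain ⟨r, hr, hsr, hrdeg⟩ := exists_mem_weightedSumSq_dvd_sub hdeg hs
  obtain ⟨q, hq⟩ : p ∣ 1 + r := by simpa [add_sub_assoc] using dvd_sub hdvd hsr
  have eval_pos (x : K) : 0 < p.eval x * q.eval x := by
    rw [← Polynomial.eval_mul, ← hq, Polynomial.eval_add, Polynomial.eval_one]
    linarith [eval_nonneg_of_mem_weightedSumSq hr x]
  have hqab : q.eval a * q.eval b < 0 := by
    refine neg_of_mul_pos_right ?_ hp.le
    linarith [mul_pos (eval_pos a) (eval_pos b)]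
  have hp0 : p ≠ 0 := by rintro rfl; simp at hdeg
  have hq0 : q ≠ 0 := by rintro rfl; simp at hqab
  have hlt : q.natDegree < p.natDegree := by
    have hmul := Polynomial.natDegree_mul hp0 hq0
    have hadd := Polynomial.natDegree_add_le 1 r
    rw [Polynomial.natDegree_one, hq] at hadd
    omega
  exact ih _ hlt q hqab hr rfl (hq ▸ dvd_mul_left q p)

theorem exists_isOrdering_adjoinRoot {p : Polynomial K} {a b : K}
    (hp : p.eval a * p.eval b < 0) :
    ∃ O : RingPreordering (AdjoinRoot p), O.IsOrdering ∧
      ∀ c : K, 0 ≤ c → AdjoinRoot.of p c ∈ O := by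
  have hsq (x : AdjoinRoot p) : x ^ 2 ∈ (weightedSumSq K).map (AdjoinRoot.mk p) := by
    obtain ⟨h, rfl⟩ := AdjoinRoot.mk_surjective x
    exact ⟨h ^ 2, sq_mem_preorderingClosure _ h, map_pow _ h 2⟩
  have hneg : -1 ∉ (weightedSumSq K).map (AdjoinRoot.mk p) := by
    rintro ⟨s, hs, hmk⟩
    refine not_dvd_one_add_of_mem_weightedSumSq p hp hs (AdjoinRoot.mk_eq_zero.1 ?_)
    rw [map_add, hmk, map_one, add_neg_cancel]
  obtain ⟨O, hO, hord⟩ := exists_isOrdering_ge hsq hneg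
  refine ⟨O, hord, fun c hc => hO ⟨Polynomial.C c, ?_, rfl⟩⟩
  simpa using C_mul_sq_mem_weightedSumSq hc 1

end AdjoinRoot

section SubringOrdering

variable {C : Type*} [Field C]

/-- `P` is the set of nonnegative elements of a ring ordering of the subring `P - P`. -/
structure IsSubringOrdering (P : Subsemiring C) : Prop where
  eq_zero_of_neg_mem : ∀ x ∈ P, -x ∈ P → x = 0
  sub_mem_or_sub_mem : ∀ x ∈ P, ∀ y ∈ P, x - y ∈ P ∨ y - x ∈ P

lemma isSubringOrdering_map {A : Type*} [CommRing A] {O : RingPreordering A} (hO : O.IsOrdering)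
    (ψ : A →+* C) (hker : ∀ x, ψ x = 0 ↔ x ∈ O.support) :
    IsSubringOrdering (O.toSubsemiring.map ψ) where
  eq_zero_of_neg_mem := by
    rintro _ ⟨x, hx, rfl⟩ ⟨y, hy, hxy⟩
    have hsum : x + y ∈ O.support := (hker _).1 (by rw [map_add, hxy, add_neg_cancel])
    have hneg : y + -(x + y) ∈ O := add_mem hy (RingPreordering.mem_support.1 hsum).2
    exact (hker x).2 (RingPreordering.mem_support.2 ⟨hx, by simpa using hneg⟩)
  sub_mem_or_sub_mem := by
    rintro _ ⟨x, -, rfl⟩ _ ⟨y, -, rfl⟩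
    refine (mem_or_neg_mem O (x - y)).imp (fun h => ⟨_, h, map_sub ψ x y⟩) fun h => ⟨_, h, ?_⟩
    rw [neg_sub, map_sub]

lemma exists_maximal_isSubringOrdering {P : Subsemiring C} (hP : IsSubringOrdering P) :
    ∃ Q, P ≤ Q ∧ Maximal IsSubringOrdering Q := by
  refine zorn_le_nonempty₀ {Q : Subsemiring C | IsSubringOrdering Q} ?_ P hP
  intro c hc hchain Q hQ
  have mem_sSup {x : C} : x ∈ sSup c ↔ ∃ R ∈ c, x ∈ R :=
    Subsemiring.mem_sSup_of_directedOn ⟨Q, hQ⟩ hchain.directedOn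
  have exists_common {x y : C} (hx : x ∈ sSup c) (hy : y ∈ sSup c) :
      ∃ R ∈ c, x ∈ R ∧ y ∈ R := by
    obtain ⟨R, hR, hxR⟩ := mem_sSup.1 hx
    obtain ⟨S, hS, hyS⟩ := mem_sSup.1 hy
    obtain ⟨T, hT, hRT, hST⟩ := hchain.directedOn R hR S hS
    exact ⟨T, hT, hRT hxR, hST hyS⟩
  refine ⟨sSup c, ⟨fun x hx hnx => ?_, fun x hx y hy => ?_⟩, fun _ => le_sSup⟩
  · obtain ⟨R, hR, hxR, hnxR⟩ := exists_common hx hnx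
    exact (hc hR).eq_zero_of_neg_mem x hxR hnxR
  · obtain ⟨R, hR, hxR, hyR⟩ := exists_common hx hy
    exact ((hc hR).sub_mem_or_sub_mem x hxR y hyR).imp (le_sSup hR ·) (le_sSup hR ·)

/-- The quotients `u / v` with `u, v ∈ P` and `v ≠ 0`. -/
def fractionSubsemiring (P : Subsemiring C) : Subsemiring C where
  carrier := {z | ∃ v ∈ P, v ≠ 0 ∧ z * v ∈ P}
  zero_mem' := ⟨1, P.one_mem, one_ne_zero, by simp⟩
  one_mem' := ⟨1, P.one_mem, one_ne_zero, by simp⟩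
  add_mem' := by
    rintro z w ⟨v, hv, hv0, hz⟩ ⟨u, hu, hu0, hw⟩
    refine ⟨v * u, mul_mem hv hu, mul_ne_zero hv0 hu0, ?_⟩
    convert add_mem (mul_mem hz hu) (mul_mem hw hv) using 1
    ring
  mul_mem' := by
    rintro z w ⟨v, hv, hv0, hz⟩ ⟨u, hu, hu0, hw⟩
    refine ⟨v * u, mul_mem hv hu, mul_ne_zero hv0 hu0, ?_⟩
    simpa only [mul_mul_mul_comm] using mul_mem hz hw

lemma isSubringOrdering_fractionSubsemiring {P : Subsemiring C} (hP : IsSubringOrdering P) :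
    IsSubringOrdering (fractionSubsemiring P) where
  eq_zero_of_neg_mem := by
    rintro z ⟨v, hv, hv0, hz⟩ ⟨u, hu, hu0, hnz⟩
    have hzero : z * v * u = 0 := by
      refine hP.eq_zero_of_neg_mem _ (mul_mem hz hu) ?_
      convert mul_mem hnz hv using 1
      ring
    simpa [hv0, hu0] using hzero
  sub_mem_or_sub_mem := by
    rintro z ⟨v, hv, hv0, hz⟩ w ⟨u, hu, hu0, hw⟩
    have hvu := mul_ne_zero hv0 hu0
    refine (hP.sub_mem_or_sub_mem _ (mul_mem hz hu) _ (mul_mem hw hv)).imp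
      (fun h => ⟨v * u, mul_mem hv hu, hvu, ?_⟩) (fun h => ⟨v * u, mul_mem hv hu, hvu, ?_⟩)
    all_goals convert h using 1; ring

lemma inv_mem_of_maximal_isSubringOrdering {P : Subsemiring C}
    (hP : Maximal IsSubringOrdering P) {x : C} (hx : x ∈ P) : x⁻¹ ∈ P := by
  rcases eq_or_ne x 0 with rfl | hx0
  · simp
  · refine hP.2 (isSubringOrdering_fractionSubsemiring hP.1)
      (fun z hz => ⟨1, P.one_mem, one_ne_zero, by simpa using hz⟩) ⟨x, hx, hx0, ?_⟩
    simp [hx0]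

/-- The subfield `P ∪ -P` ordered by `P`. -/
def orderedSubfield (P : Subsemiring C) (hP : IsSubringOrdering P)
    (hinv : ∀ x ∈ P, x⁻¹ ∈ P) : Subfield C where
  carrier := {x | x ∈ P ∨ -x ∈ P}
  zero_mem' := Or.inl P.zero_mem
  one_mem' := Or.inl P.one_mem
  add_mem' := by
    rintro x y (hx | hx) (hy | hy)
    · exact Or.inl (add_mem hx hy)
    · simpa [sub_eq_add_neg, add_comm] using hP.sub_mem_or_sub_mem _ hx _ hy
    · simpa [sub_eq_add_neg, add_comm] using (hP.sub_mem_or_sub_mem _ hx _ hy).symm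
    · exact Or.inr (by simpa [add_comm] using add_mem hx hy)
  mul_mem' := by
    rintro x y (hx | hx) (hy | hy)
    · exact Or.inl (mul_mem hx hy)
    · exact Or.inr (by simpa using mul_mem hx hy)
    · exact Or.inr (by simpa using mul_mem hx hy)
    · exact Or.inl (by simpa using mul_mem hx hy)
  neg_mem' := by
    rintro x (hx | hx)
    · exact Or.inr (by simpa using hx)
    · exact Or.inl hx
  inv_mem' := by
    rintro x (hx | hx)
    · exact Or.inl (hinv x hx)
    · exact Or.inr (by simpa [inv_neg] using hinv _ hx)

lemma exists_linearOrder_orderedSubfield {P : Subsemiring C} (hP : IsSubringOrdering P)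
    (hinv : ∀ x ∈ P, x⁻¹ ∈ P) :
    ∃ (_ : LinearOrder (orderedSubfield P hP hinv))
      (_ : IsStrictOrderedRing (orderedSubfield P hP hinv)),
      ∀ x : orderedSubfield P hP hinv, 0 ≤ x ↔ (x : C) ∈ P := by
  classical
  let E := orderedSubfield P hP hinv
  let Q : RingCone E := .mk (P.comap E.subtype) fun {x} hx hnx =>
    Subtype.ext (hP.eq_zero_of_neg_mem x hx hnx)
  have : HasMemOrNegMem Q := ⟨fun x => x.2⟩
  let order : LinearOrder E := .mkOfAddGroupCone Q
  have : IsOrderedRing E := .mkOfCone Q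
  refine ⟨order, IsOrderedRing.toIsStrictOrderedRing E, fun x => ?_⟩
  change x - 0 ∈ Q ↔ _
  rw [sub_zero]
  rfl

end SubringOrdering

section RealClosure

/-- The intermediate value property for polynomials, which among ordered fields characterizes the
real closed ones. -/
def PolynomialIVT (R : Type*) [Field R] [LinearOrder R] : Prop :=
  ∀ (p : Polynomial R) (a b : R), a < b → p.eval a * p.eval b < 0 →
    ∃ c ∈ Set.Ioo a b, p.eval c = 0

section OrderedField

variable {K : Type*} [Field K] [LinearOrder K] [IsStrictOrderedRing K]

lemma exists_irreducible_dvd_of_eval_mul_eval_neg {p : Polynomial K} {a b : K}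
    (hp : p.eval a * p.eval b < 0) :
    ∃ q, Irreducible q ∧ q ∣ p ∧ q.eval a * q.eval b < 0 := by
  induction p using WfDvdMonoid.induction_on_irreducible with
  | zero => simp at hp
  | unit u hu =>
    obtain ⟨c, -, rfl⟩ := Polynomial.isUnit_iff.1 hu
    rw [Polynomial.eval_C, Polynomial.eval_C] at hp
    exact absurd hp (mul_self_nonneg c).not_gt
  | mul p q _ hq ih =>
    rcases lt_or_ge (q.eval a * q.eval b) 0 with hqab | hqab
    · exact ⟨q, hq, dvd_mul_right q p, hqab⟩
    · rw [Polynomial.eval_mul, Polynomial.eval_mul, mul_mul_mul_comm] at hp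
      obtain ⟨r, hr, hrp, hrab⟩ := ih (neg_of_mul_neg_right hp hqab)
      exact ⟨r, hr, hrp.mul_left q, hrab⟩

lemma mem_Ioo_of_irreducible_of_eval_mul_eval_neg {p : Polynomial K} (hirr : Irreducible p)
    {a b c : K} (hab : a < b) (hp : p.eval a * p.eval b < 0) (hc : p.eval c = 0) :
    c ∈ Set.Ioo a b := by
  obtain ⟨u, rfl⟩ := (Polynomial.irreducible_X_sub_C c).associated_of_dvd hirr
    (Polynomial.dvd_iff_isRoot.2 hc)
  obtain ⟨k, -, hk⟩ := Polynomial.isUnit_iff.1 u.isUnit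
  have hprod : (a - c) * (b - c) * k ^ 2 < 0 := by
    rw [← hk] at hp
    simp only [Polynomial.eval_mul, Polynomial.eval_sub, Polynomial.eval_X,
      Polynomial.eval_C] at hp
    linarith
  rcases mul_neg_iff.1 (neg_of_mul_neg_left hprod (sq_nonneg k)) with ⟨ha, hb⟩ | ⟨ha, hb⟩
  · linarith
  · exact ⟨sub_neg.1 ha, sub_pos.1 hb⟩

theorem polynomialIVT_of_irreducible
    (h : ∀ (p : Polynomial K) (a b : K), Irreducible p → p.eval a * p.eval b < 0 →
      ∃ c, p.eval c = 0) : PolynomialIVT K := by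
  intro p a b hab hp
  obtain ⟨q, hq, hqp, hqab⟩ := exists_irreducible_dvd_of_eval_mul_eval_neg hp
  obtain ⟨c, hc⟩ := h q a b hq hqab
  exact ⟨c, mem_Ioo_of_irreducible_of_eval_mul_eval_neg hq hab hqab hc,
    Polynomial.eval_eq_zero_of_dvd_of_eval_eq_zero hqp hc⟩

end OrderedField

theorem polynomialIVT_of_maximal_isSubringOrdering {C : Type*} [Field C] [IsAlgClosed C]
    {P : Subsemiring C} (hP : Maximal IsSubringOrdering P) {E : Subfield C} [LinearOrder E]
    [IsStrictOrderedRing E] (hE : ∀ x, x ∈ P ∨ -x ∈ P ↔ x ∈ E)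
    (hnonneg : ∀ x : E, 0 ≤ x ↔ (x : C) ∈ P) : PolynomialIVT E := by
  refine polynomialIVT_of_irreducible fun p a b hirr hab => ?_
  have : Fact (Irreducible p) := ⟨hirr⟩
  obtain ⟨O, hO, hO_nonneg⟩ := exists_isOrdering_adjoinRoot hab
  obtain ⟨α, hα⟩ := IsAlgClosed.exists_aeval_eq_zero C p
    (Polynomial.degree_pos_of_irreducible hirr).ne'
  let j : AdjoinRoot p →+* C := AdjoinRoot.lift (algebraMap E C) α hα
  have hO_map : IsSubringOrdering (O.toSubsemiring.map j) := by
    refine isSubringOrdering_map hO j fun x => ?_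
    rw [RingPreordering.support_eq_bot, Ideal.mem_bot, map_eq_zero]
  have hle : O.toSubsemiring.map j ≤ P := by
    refine hP.2 hO_map fun x hx => ?_
    have hxE : x ∈ E := (hE x).1 (Or.inl hx)
    exact ⟨AdjoinRoot.of p ⟨x, hxE⟩, hO_nonneg _ ((hnonneg _).2 hx), AdjoinRoot.lift_of hα⟩
  have hαE : α ∈ E := by
    rw [← hE, ← (AdjoinRoot.lift_root hα : j (AdjoinRoot.root p) = α), ← map_neg]
    exact (mem_or_neg_mem O (AdjoinRoot.root p)).imp (fun h => hle ⟨_, h, rfl⟩)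
      (fun h => hle ⟨_, h, rfl⟩)
  refine ⟨⟨α, hαE⟩, (algebraMap E C).injective ?_⟩
  rw [map_zero, ← hα, ← Polynomial.aeval_algebraMap_apply_eq_algebraMap_eval]
  rfl

theorem exists_polynomialIVT_field_of_isOrdering.{u} {A : Type u} [CommRing A]
    {O : RingPreordering A} (hO : O.IsOrdering) :
    ∃ (R : Type u) (_ : Field R) (_ : LinearOrder R) (_ : IsStrictOrderedRing R),
      PolynomialIVT R ∧ ∃ φ : A →+* R, ∀ x ∈ O, 0 ≤ φ x := by
  let F := O.support.ResidueField
  let ψ : A →+* AlgebraicClosure F := (algebraMap F _).comp (algebraMap A F)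
  have hker (x : A) : ψ x = 0 ↔ x ∈ O.support := by
    rw [RingHom.comp_apply, map_eq_zero, Ideal.algebraMap_residueField_eq_zero]
  obtain ⟨P, hOP, hP⟩ := exists_maximal_isSubringOrdering (isSubringOrdering_map hO ψ hker)
  have hinv : ∀ x ∈ P, x⁻¹ ∈ P := fun _ => inv_mem_of_maximal_isSubringOrdering hP
  obtain ⟨_, _, hnonneg⟩ := exists_linearOrder_orderedSubfield hP.1 hinv
  have hψ (x : A) : ψ x ∈ orderedSubfield P hP.1 hinv := by
    refine (mem_or_neg_mem O x).imp (fun h => hOP ⟨x, h, rfl⟩) fun h => ?_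
    rw [← map_neg]
    exact hOP ⟨-x, h, rfl⟩
  refine ⟨orderedSubfield P hP.1 hinv, inferInstance, inferInstance, inferInstance,
    polynomialIVT_of_maximal_isSubringOrdering hP (fun _ => Iff.rfl) hnonneg,
    ψ.codRestrict _ hψ, fun x hx => (hnonneg _).2 (hOP ⟨x, hx, rfl⟩)⟩

end RealClosure

section IntermediateValue

lemma exists_eq_X_sub_C_pow_succ_mul {R : Type*} [CommRing R] {p : Polynomial R} (hp : p ≠ 0)
    {a : R} (ha : p.eval a = 0) :
    ∃ (m : ℕ) (q : Polynomial R),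
      p = (Polynomial.X - Polynomial.C a) ^ (m + 1) * q ∧ q.eval a ≠ 0 := by
  obtain ⟨q, hpq, hq⟩ := Polynomial.exists_eq_pow_rootMultiplicity_mul_and_not_dvd p hp a
  obtain ⟨m, hm⟩ := Nat.exists_eq_add_of_lt ((Polynomial.rootMultiplicity_pos hp).2 ha)
  rw [hm, zero_add] at hpq
  exact ⟨m, q, hpq, fun h => hq (Polynomial.dvd_iff_isRoot.2 h)⟩

lemma exists_derivative_eq_X_sub_C_pow_mul {R : Type*} [CommRing R] (a b : R) (m n : ℕ)
    (q : Polynomial R) :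
    ∃ r : Polynomial R,
      ((Polynomial.X - Polynomial.C a) ^ (m + 1) *
        ((Polynomial.X - Polynomial.C b) ^ (n + 1) * q)).derivative =
        (Polynomial.X - Polynomial.C a) ^ m * (Polynomial.X - Polynomial.C b) ^ n * r ∧
      r.eval a = (m + 1) * (a - b) * q.eval a ∧ r.eval b = (n + 1) * (b - a) * q.eval b := by
  refine ⟨((m + 1 : ℕ) : Polynomial R) * (Polynomial.X - Polynomial.C b) * q +
    ((n + 1 : ℕ) : Polynomial R) * (Polynomial.X - Polynomial.C a) * q +
    (Polynomial.X - Polynomial.C a) * (Polynomial.X - Polynomial.C b) * q.derivative, ?_, ?_, ?_⟩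
  · simp only [Polynomial.derivative_mul, Polynomial.derivative_X_sub_C_pow, Nat.add_sub_cancel,
      map_natCast]
    ring
  · simp
  · simp

variable {R : Type*} [Field R] [LinearOrder R] [IsStrictOrderedRing R]

lemma sign_eq_sign_of_mul_pos {x y : R} (h : 0 < x * y) : SignType.sign x = SignType.sign y := by
  rcases mul_pos_iff.1 h with ⟨hx, hy⟩ | ⟨hx, hy⟩
  · rw [sign_pos hx, sign_pos hy]
  · rw [sign_neg hx, sign_neg hy]

namespace PolynomialIVT

variable {p : Polynomial R} {a b : R}

lemma eval_mul_eval_pos (hR : PolynomialIVT R) (hab : a ≤ b) (h : ∀ c ∈ Set.Icc a b, p.eval c ≠ 0) :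
    0 < p.eval a * p.eval b := by
  rcases hab.eq_or_lt with rfl | hlt
  · exact mul_self_pos.2 (h a (Set.left_mem_Icc.2 le_rfl))
  by_contra! hle
  have hne := mul_ne_zero (h a (Set.left_mem_Icc.2 hab)) (h b (Set.right_mem_Icc.2 hab))
  obtain ⟨c, hc, hpc⟩ := hR p a b hlt (lt_of_le_of_ne hle hne)
  exact h c (Set.Ioo_subset_Icc_self hc) hpc

lemma sign_eval_eq_sign_eval (hR : PolynomialIVT R) (h : ∀ c, p.eval c ≠ 0) (a b : R) :
    SignType.sign (p.eval a) = SignType.sign (p.eval b) := by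
  rcases le_total a b with hab | hab
  · exact sign_eq_sign_of_mul_pos (hR.eval_mul_eval_pos hab fun c _ => h c)
  · exact (sign_eq_sign_of_mul_pos (hR.eval_mul_eval_pos hab fun c _ => h c)).symm

/- Cancelling the factors `X - a` and `X - b` from the derivative leaves a polynomial that takes
values of opposite signs at `a` and `b`. -/
lemma exists_derivative_eq_zero_of_consecutive_roots (hR : PolynomialIVT R) (hp : p ≠ 0)
    (hab : a < b) (ha : p.eval a = 0) (hb : p.eval b = 0)
    (hroots : ∀ c ∈ Set.Ioo a b, p.eval c ≠ 0) :
    ∃ c ∈ Set.Ioo a b, p.derivative.eval c = 0 := by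
  obtain ⟨m, q₁, rfl, hq₁a⟩ := exists_eq_X_sub_C_pow_succ_mul hp ha
  have hq₁b : q₁.eval b = 0 := by simpa [sub_eq_zero, hab.ne'] using hb
  obtain ⟨n, q, rfl, hqb⟩ := exists_eq_X_sub_C_pow_succ_mul (right_ne_zero_of_mul hp) hq₁b
  have hq : ∀ c ∈ Set.Icc a b, q.eval c ≠ 0 := by
    rintro c ⟨hac, hcb⟩ hqc
    rcases hac.eq_or_lt with rfl | hac
    · simp [hqc] at hq₁a
    rcases hcb.eq_or_lt with rfl | hcb
    · exact hqb hqc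
    · exact hroots c ⟨hac, hcb⟩ (by simp [hqc])
  obtain ⟨r, hderiv, hra, hrb⟩ := exists_derivative_eq_X_sub_C_pow_mul a b m n q
  have hpos : 0 < (m + 1) * (n + 1) * (b - a) ^ 2 * (q.eval a * q.eval b) :=
    mul_pos (mul_pos (by positivity) (pow_pos (sub_pos.2 hab) 2))
      (hR.eval_mul_eval_pos hab.le hq)
  obtain ⟨c, hc, hrc⟩ := hR r a b hab (by rw [hra, hrb]; linarith)
  rw [hderiv]
  exact ⟨c, hc, by rw [Polynomial.eval_mul, hrc, mul_zero]⟩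

theorem exists_derivative_eq_zero (hR : PolynomialIVT R) (hab : a < b) (ha : p.eval a = 0)
    (hb : p.eval b = 0) : ∃ c ∈ Set.Ioo a b, p.derivative.eval c = 0 := by
  classical
  rcases eq_or_ne p 0 with rfl | hp
  · obtain ⟨c, hc⟩ := exists_between hab
    exact ⟨c, hc, by simp⟩
  have mem_filter {x : R} : x ∈ p.roots.toFinset.filter (a < ·) ↔ p.eval x = 0 ∧ a < x := by
    simp [hp]
  obtain ⟨r, hr, hmin⟩ := Finset.exists_min_image (p.roots.toFinset.filter (a < ·)) id
    ⟨b, mem_filter.2 ⟨hb, hab⟩⟩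
  obtain ⟨hpr, har⟩ := mem_filter.1 hr
  obtain ⟨c, ⟨hac, hcr⟩, hc⟩ :=
    hR.exists_derivative_eq_zero_of_consecutive_roots hp har ha hpr fun c hc hpc =>
      (hmin c (mem_filter.2 ⟨hpc, hc.1⟩)).not_gt hc.2
  exact ⟨c, ⟨hac, hcr.trans_le (hmin b (mem_filter.2 ⟨hb, hab⟩))⟩, hc⟩

lemma sign_eval_mul_eval_of_derivative_ne_zero (hR : PolynomialIVT R) {r x : R}
    (hr : r ∈ Set.Ioo a b) (hpr : p.eval r = 0)
    (hderiv : ∀ c ∈ Set.Ioo a b, p.derivative.eval c ≠ 0)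
    (hx : x ∈ Set.Icc a b) :
    SignType.sign (p.eval x * p.eval b) = SignType.sign (x - r) := by
  obtain ⟨q, rfl⟩ := Polynomial.dvd_iff_isRoot.2 hpr
  have hq : ∀ c ∈ Set.Icc a b, q.eval c ≠ 0 := by
    rintro c ⟨hac, hcb⟩ hqc
    have hpc : ((Polynomial.X - Polynomial.C r) * q).eval c = 0 := by
      rw [Polynomial.eval_mul, hqc, mul_zero]
    rcases lt_trichotomy c r with hcr | rfl | hrc
    · obtain ⟨y, hy, hpy⟩ := hR.exists_derivative_eq_zero hcr hpc hpr
      exact hderiv y ⟨hac.trans_lt hy.1, hy.2.trans hr.2⟩ hpy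
    · exact hderiv c hr (by simp [hqc])
    · obtain ⟨y, hy, hpy⟩ := hR.exists_derivative_eq_zero hrc hpr hpc
      exact hderiv y ⟨hr.1.trans hy.1, hy.2.trans_le hcb⟩ hpy
  have hpos : 0 < (b - r) * (q.eval x * q.eval b) :=
    mul_pos (sub_pos.2 hr.2) (hR.eval_mul_eval_pos hx.2 fun c hc => hq c ⟨hx.1.trans hc.1, hc.2⟩)
  calc SignType.sign _ = SignType.sign ((x - r) * ((b - r) * (q.eval x * q.eval b))) := by
        congr 1
        simp only [Polynomial.eval_mul, Polynomial.eval_sub, Polynomial.eval_X, Polynomial.eval_C]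
        ring
    _ = SignType.sign (x - r) := by rw [sign_mul, sign_pos hpos, mul_one]

end PolynomialIVT

end IntermediateValue

section RootsOfOrderedSubfield

lemma exists_finset_gap_around {E R : Type*} [LinearOrder E] [LinearOrder R] (f : E → R) {α : R}
    (hα : α ∉ Set.range f) (hlower : ∃ a, f a < α) (hupper : ∃ b, α < f b) (S : Finset E) :
    ∃ a b, α ∈ Set.Ioo (f a) (f b) ∧ ∀ z ∈ S, z ∉ Set.Ioo a b := by
  induction S using Finset.induction_on with
  | empty =>
    obtain ⟨a, ha⟩ := hlower
    obtain ⟨b, hb⟩ := hupper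
    exact ⟨a, b, ⟨ha, hb⟩, by simp⟩
  | insert z S _ ih =>
    obtain ⟨a, b, ⟨ha, hb⟩, hS⟩ := ih
    rcases lt_or_gt_of_ne fun hz => hα ⟨z, hz⟩ with hz | hz
    · refine ⟨max a z, b, ⟨by rcases max_choice a z with h | h <;> rwa [h], hb⟩, ?_⟩
      simp only [Finset.forall_mem_insert, Set.mem_Ioo, max_lt_iff] at hS ⊢
      exact ⟨fun h => h.1.2.false, fun y hy h => hS y hy ⟨h.1.1, h.2⟩⟩
    · refine ⟨a, min b z, ⟨ha, by rcases min_choice b z with h | h <;> rwa [h]⟩, ?_⟩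
      simp only [Finset.forall_mem_insert, Set.mem_Ioo, lt_min_iff] at hS ⊢
      exact ⟨fun h => h.2.2.false, fun y hy h => hS y hy ⟨h.1, h.2.1⟩⟩

variable {E R : Type*} [Field E] [Field R]

/-- The roots in `R` of a nonzero polynomial over `E` all lie in the image of `σ : E → R`. -/
def RootsLift (σ : E →+* R) (g : Polynomial E) : Prop :=
  g ≠ 0 → ∀ x, g.eval₂ σ x = 0 → x ∈ Set.range σ

lemma RootsLift.of_mul_right {σ : E →+* R} {f g : Polynomial E} (h : RootsLift σ (f * g))
    (h0 : f * g ≠ 0) : RootsLift σ g :=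
  fun _ x hx => h h0 x (by rw [Polynomial.eval₂_mul, hx, mul_zero])

variable [LinearOrder R] [IsStrictOrderedRing R]

/-- The convex hull in `R` of the subfield `σ E`, as a valuation ring of `R`. -/
def boundedValuationSubring (σ : E →+* R) : ValuationSubring R where
  carrier := {x | ∃ e, |x| ≤ σ e}
  zero_mem' := ⟨0, by simp⟩
  one_mem' := ⟨1, by simp⟩
  add_mem' := by
    rintro x y ⟨d, hd⟩ ⟨e, he⟩
    exact ⟨d + e, (abs_add_le x y).trans (by rw [map_add]; exact add_le_add hd he)⟩
  mul_mem' := by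
    rintro x y ⟨d, hd⟩ ⟨e, he⟩
    refine ⟨d * e, ?_⟩
    rw [abs_mul, map_mul]
    exact mul_le_mul hd he (abs_nonneg y) ((abs_nonneg x).trans hd)
  neg_mem' := by
    rintro x ⟨e, he⟩
    exact ⟨e, by rwa [abs_neg]⟩
  mem_or_inv_mem' x := by
    rcases le_total |x| 1 with hx | hx
    · exact .inl ⟨1, by rwa [map_one]⟩
    · exact .inr ⟨1, by rw [map_one, abs_inv]; exact inv_le_one_of_one_le₀ hx⟩

lemma map_mem_boundedValuationSubring (σ : E →+* R) (e : E) :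
    σ e ∈ boundedValuationSubring σ := by
  rcases abs_choice (σ e) with h | h
  · exact ⟨e, h.le⟩
  · exact ⟨-e, by rw [h, map_neg]⟩

lemma exists_abs_lt_of_eval₂_eq_zero {σ : E →+* R} {h : Polynomial E} (h0 : h ≠ 0) {α : R}
    (hα : h.eval₂ σ α = 0) : ∃ e, |α| < σ e := by
  let ι : E →+* boundedValuationSubring σ :=
    σ.codRestrict (boundedValuationSubring σ) (map_mem_boundedValuationSubring σ)
  have hint : IsIntegral (boundedValuationSubring σ) α := by
    refine ⟨(h * Polynomial.C h.leadingCoeff⁻¹).map ι,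
      (Polynomial.monic_mul_leadingCoeff_inv h0).map ι, ?_⟩
    rw [Polynomial.eval₂_map]
    change (h * Polynomial.C h.leadingCoeff⁻¹).eval₂ σ α = 0
    rw [Polynomial.eval₂_mul, hα, zero_mul]
  obtain ⟨⟨_, e, he⟩, rfl⟩ := IsIntegrallyClosed.isIntegral_iff.1 hint
  exact ⟨e + 1, by rw [map_add, map_one]; exact he.trans_lt (lt_add_one _)⟩

variable {σ : E →+* R} [LinearOrder E]

lemma sign_eval₂_eq_sign_eval_of_forall_eval_ne_zero (hR : PolynomialIVT R)
    (hσ : StrictMono σ) {q : Polynomial E} (hq : RootsLift σ q) (hne : ∀ z, q.eval z ≠ 0)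
    (α : R) (e : E) :
    SignType.sign (q.eval₂ σ α) = SignType.sign (q.eval e) := by
  rw [← hσ.sign_comp, ← Polynomial.eval₂_at_apply, Polynomial.eval₂_eq_eval_map,
    Polynomial.eval₂_eq_eval_map]
  refine hR.sign_eval_eq_sign_eval (fun c hc => ?_) α (σ e)
  rw [Polynomial.eval_map] at hc
  obtain ⟨z, rfl⟩ := hq (by rintro rfl; simp at hne) c hc
  rw [Polynomial.eval₂_at_apply, map_eq_zero] at hc
  exact hne z hc

lemma sign_eval_mul_eval_eq_sign_sub (hR : PolynomialIVT R)
    (hσ : StrictMono σ) {h : Polynomial E} (hd0 : h.derivative ≠ 0)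
    (hd : RootsLift σ h.derivative) {a b : E} (hgap : ∀ z ∈ h.derivative.roots, z ∉ Set.Ioo a b)
    {r : R} (hr : r ∈ Set.Ioo (σ a) (σ b)) (hroot : h.eval₂ σ r = 0) {x : E}
    (hx : x ∈ Set.Icc a b) :
    SignType.sign (h.eval x * h.eval b) = SignType.sign (σ x - r) := by
  have hne : ∀ c ∈ Set.Ioo (σ a) (σ b), (h.map σ).derivative.eval c ≠ 0 := by
    intro c hc hdc
    rw [Polynomial.derivative_map, Polynomial.eval_map] at hdc
    obtain ⟨z, rfl⟩ := hd hd0 c hdc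
    rw [Polynomial.eval₂_at_apply, map_eq_zero] at hdc
    exact hgap z ((Polynomial.mem_roots hd0).2 hdc) ⟨hσ.lt_iff_lt.1 hc.1, hσ.lt_iff_lt.1 hc.2⟩
  rw [← Polynomial.eval_map] at hroot
  rw [← hR.sign_eval_mul_eval_of_derivative_ne_zero hr hroot hne
    ⟨hσ.monotone hx.1, hσ.monotone hx.2⟩, Polynomial.eval_map, Polynomial.eval_map,
    Polynomial.eval₂_at_apply, Polynomial.eval₂_at_apply, ← map_mul, hσ.sign_comp]

end RootsOfOrderedSubfield

section SignMaximal

lemma sign_eval₂_prod_X_sub_C {E R : Type*} [CommRing E] [CommRing R] [LinearOrder R]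
    [IsStrictOrderedRing R] (σ : E →+* R) (S : Multiset E) (α : R) :
    SignType.sign ((S.map fun z => Polynomial.X - Polynomial.C z).prod.eval₂ σ α) =
      (S.map fun z => SignType.sign (α - σ z)).prod := by
  rw [Polynomial.eval₂_multiset_prod, ← signHom_apply, map_multiset_prod, Multiset.map_map,
    Multiset.map_map]
  simp

lemma eval₂_mod_eq {F K : Type*} [Field F] [CommRing K] {σ : F →+* K} {h : Polynomial F} {x : K}
    (hx : h.eval₂ σ x = 0) (g : Polynomial F) : (g % h).eval₂ σ x = g.eval₂ σ x := by
  conv_rhs => rw [← EuclideanDomain.div_add_mod g h]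
  rw [Polynomial.eval₂_add, Polynomial.eval₂_mul, hx, zero_mul, zero_add]

variable {E R₁ R₂ : Type*} [Field E] [Field R₁] [LinearOrder R₁] [Field R₂] [LinearOrder R₂]

/-- The embeddings `σ₁, σ₂` of `E` cannot be extended to a larger common ordered subfield of `R₁`
and `R₂`: elements of `R₁` and `R₂` that satisfy the same sign conditions over `E` come from
`E`. -/
def IsSignMaximal (σ₁ : E →+* R₁) (σ₂ : E →+* R₂) : Prop :=
  ∀ α β, (∀ g : Polynomial E, SignType.sign (g.eval₂ σ₁ α) = SignType.sign (g.eval₂ σ₂ β)) →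
    α ∈ Set.range σ₁ ∧ β ∈ Set.range σ₂

lemma IsSignMaximal.symm {σ₁ : E →+* R₁} {σ₂ : E →+* R₂} (h : IsSignMaximal σ₁ σ₂) :
    IsSignMaximal σ₂ σ₁ := fun α β hαβ => (h β α fun g => (hαβ g).symm).symm

variable [LinearOrder E] [IsStrictOrderedRing R₁] [IsStrictOrderedRing R₂]
  {σ₁ : E →+* R₁} {σ₂ : E →+* R₂}

theorem sign_eval₂_eq_sign_eval₂ (hR₁ : PolynomialIVT R₁) (hR₂ : PolynomialIVT R₂)
    (hσ₁ : StrictMono σ₁) (hσ₂ : StrictMono σ₂) {g : Polynomial E} (hg₁ : RootsLift σ₁ g)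
    (hg₂ : RootsLift σ₂ g) {α : R₁} {β : R₂}
    (hcut : ∀ z ∈ g.roots, SignType.sign (α - σ₁ z) = SignType.sign (β - σ₂ z)) :
    SignType.sign (g.eval₂ σ₁ α) = SignType.sign (g.eval₂ σ₂ β) := by
  rcases eq_or_ne g 0 with rfl | h0
  · simp
  obtain ⟨q, hgq, -, hq⟩ := Polynomial.exists_prod_multiset_X_sub_C_mul g
  rw [← hgq] at hg₁ hg₂ h0
  have hne : ∀ z, q.eval z ≠ 0 := fun z hz => by
    simpa [hq] using (Polynomial.mem_roots (right_ne_zero_of_mul h0)).2 hz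
  rw [← hgq, Polynomial.eval₂_mul, Polynomial.eval₂_mul, sign_mul, sign_mul,
    sign_eval₂_prod_X_sub_C, sign_eval₂_prod_X_sub_C, Multiset.map_congr rfl hcut,
    sign_eval₂_eq_sign_eval_of_forall_eval_ne_zero hR₁ hσ₁ (hg₁.of_mul_right h0) hne α 0,
    sign_eval₂_eq_sign_eval_of_forall_eval_ne_zero hR₂ hσ₂ (hg₂.of_mul_right h0) hne β 0]

lemma sign_sub_eq_sign_sub_of_Ioo (hσ₁ : StrictMono σ₁) (hσ₂ : StrictMono σ₂) {a b : E} {α : R₁}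
    {β : R₂} (hα : α ∈ Set.Ioo (σ₁ a) (σ₁ b)) (hβ : β ∈ Set.Ioo (σ₂ a) (σ₂ b))
    (h : ∀ z ∈ Set.Icc a b, SignType.sign (σ₁ z - α) = SignType.sign (σ₂ z - β)) (z : E) :
    SignType.sign (α - σ₁ z) = SignType.sign (β - σ₂ z) := by
  rcases lt_or_ge z a with hza | haz
  · rw [sign_pos (sub_pos.2 ((hσ₁ hza).trans hα.1)), sign_pos (sub_pos.2 ((hσ₂ hza).trans hβ.1))]
  rcases lt_or_ge b z with hbz | hzb
  · rw [sign_neg (sub_neg.2 (hα.2.trans (hσ₁ hbz))), sign_neg (sub_neg.2 (hβ.2.trans (hσ₂ hbz)))]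
  · rw [← neg_sub, Left.sign_neg, h z ⟨haz, hzb⟩, ← Left.sign_neg, neg_sub]

/- Between consecutive roots of the derivative, a root of `h` is located by a sign change of `h`
at points of `E`, and the same sign change occurs in `R₂`. -/
theorem exists_root_same_cut (hR₁ : PolynomialIVT R₁) (hR₂ : PolynomialIVT R₂)
    (hσ₁ : StrictMono σ₁) (hσ₂ : StrictMono σ₂) {h : Polynomial E} (h0 : h ≠ 0)
    (hd₁ : RootsLift σ₁ h.derivative) (hd₂ : RootsLift σ₂ h.derivative) {α : R₁}
    (hα : h.eval₂ σ₁ α = 0) (hαE : α ∉ Set.range σ₁) :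
    ∃ β : R₂, h.eval₂ σ₂ β = 0 ∧
      ∀ z, SignType.sign (α - σ₁ z) = SignType.sign (β - σ₂ z) := by
  classical
  have hchar : CharZero E := (σ₁.charZero_iff σ₁.injective).2 inferInstance
  have hd0 : h.derivative ≠ 0 := fun hd => by
    have hC := Polynomial.eq_C_of_natDegree_eq_zero (Polynomial.derivative_eq_zero.1 hd)
    rw [hC, Polynomial.eval₂_C, map_eq_zero] at hα
    exact h0 (by rw [hC, hα, map_zero])
  obtain ⟨M, hM⟩ := exists_abs_lt_of_eval₂_eq_zero h0 hα
  obtain ⟨a, b, hαab, hgap⟩ := exists_finset_gap_around σ₁ hαE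
    ⟨-M, by rw [map_neg]; exact (abs_lt.1 hM).1⟩ ⟨M, (abs_lt.1 hM).2⟩ h.derivative.roots.toFinset
  simp only [Multiset.mem_toFinset] at hgap
  have hab : a < b := hσ₁.lt_iff_lt.1 (hαab.1.trans hαab.2)
  have sign₁ {x : E} (hx : x ∈ Set.Icc a b) :=
    sign_eval_mul_eval_eq_sign_sub hR₁ hσ₁ hd0 hd₁ hgap hαab hα hx
  have hchange : h.eval a * h.eval b < 0 := by
    rw [← sign_eq_neg_one_iff, sign₁ (Set.left_mem_Icc.2 hab.le), sign_neg (sub_neg.2 hαab.1)]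
  obtain ⟨β, hβab, hβ⟩ := hR₂ (h.map σ₂) (σ₂ a) (σ₂ b) (hσ₂ hab) (by
    rw [Polynomial.eval_map_apply, Polynomial.eval_map_apply, ← map_mul, ← map_zero σ₂]
    exact hσ₂ hchange)
  rw [Polynomial.eval_map] at hβ
  exact ⟨β, hβ, sign_sub_eq_sign_sub_of_Ioo hσ₁ hσ₂ hαab hβab fun z hz => by
    rw [← sign₁ hz, sign_eval_mul_eval_eq_sign_sub hR₂ hσ₂ hd0 hd₂ hgap hβab hβ hz]⟩

lemma exists_root_same_signs (hR₁ : PolynomialIVT R₁) (hR₂ : PolynomialIVT R₂)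
    (hσ₁ : StrictMono σ₁) (hσ₂ : StrictMono σ₂) {h : Polynomial E} (h0 : h ≠ 0)
    (hlift : ∀ g : Polynomial E, g.degree < h.degree → RootsLift σ₁ g ∧ RootsLift σ₂ g) {α : R₁}
    (hα : h.eval₂ σ₁ α = 0) (hαE : α ∉ Set.range σ₁) :
    ∃ β : R₂, ∀ g : Polynomial E,
      SignType.sign (g.eval₂ σ₁ α) = SignType.sign (g.eval₂ σ₂ β) := by
  have hd := hlift _ (Polynomial.degree_derivative_lt h0)
  obtain ⟨β, hβ, hcut⟩ := exists_root_same_cut hR₁ hR₂ hσ₁ hσ₂ h0 hd.1 hd.2 hα hαE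
  refine ⟨β, fun g => ?_⟩
  have hg := hlift (g % h) (Polynomial.degree_mod_lt g h0)
  rw [← eval₂_mod_eq hα, ← eval₂_mod_eq hβ]
  exact sign_eval₂_eq_sign_eval₂ hR₁ hR₂ hσ₁ hσ₂ hg.1 hg.2 fun z _ => hcut z

namespace IsSignMaximal

theorem rootsLift (hmax : IsSignMaximal σ₁ σ₂) (hR₁ : PolynomialIVT R₁) (hR₂ : PolynomialIVT R₂)
    (hσ₁ : StrictMono σ₁) (hσ₂ : StrictMono σ₂) (h : Polynomial E) :
    RootsLift σ₁ h ∧ RootsLift σ₂ h := by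
  induction h using WellFounded.induction Polynomial.degree_lt_wf with
  | _ h ih =>
    refine ⟨fun h0 x hx => ?_, fun h0 x hx => ?_⟩
    · by_contra hxE
      obtain ⟨β, hβ⟩ := exists_root_same_signs hR₁ hR₂ hσ₁ hσ₂ h0 ih hx hxE
      exact hxE (hmax x β hβ).1
    · by_contra hxE
      obtain ⟨β, hβ⟩ :=
        exists_root_same_signs hR₂ hR₁ hσ₂ hσ₁ h0 (fun g hg => (ih g hg).symm) hx hxE
      exact hxE (hmax.symm x β hβ).1

end IsSignMaximal

lemma exists_forall_sign_sub_eq [IsStrictOrderedRing E] {σ : E →+* R₁} (hσ : StrictMono σ) {α : R₁}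
    (hα : α ∉ Set.range σ) (S : Finset E) :
    ∃ e, ∀ z ∈ S, SignType.sign (α - σ z) = SignType.sign (e - z) := by
  obtain ⟨e, hlower, hupper⟩ := Order.exists_between_finsets (S.filter fun z => σ z < α)
    (S.filter fun z => α < σ z) fun x hx y hy =>
      hσ.lt_iff_lt.1 ((Finset.mem_filter.1 hx).2.trans (Finset.mem_filter.1 hy).2)
  refine ⟨e, fun z hz => ?_⟩
  rcases lt_or_gt_of_ne fun hzα => hα ⟨z, hzα⟩ with hzα | hαz
  · rw [sign_pos (sub_pos.2 hzα), sign_pos (sub_pos.2 (hlower z (Finset.mem_filter.2 ⟨hz, hzα⟩)))]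
  · rw [sign_neg (sub_neg.2 hαz), sign_neg (sub_neg.2 (hupper z (Finset.mem_filter.2 ⟨hz, hαz⟩)))]

theorem IsSignMaximal.exists_forall_sign_eval₂_eq [IsStrictOrderedRing E]
    (hmax : IsSignMaximal σ₁ σ₂) (hR₁ : PolynomialIVT R₁) (hR₂ : PolynomialIVT R₂)
    (hσ₁ : StrictMono σ₁) (hσ₂ : StrictMono σ₂) (G : Finset (Polynomial E)) (α : R₁) :
    ∃ β : R₂, ∀ g ∈ G, SignType.sign (g.eval₂ σ₁ α) = SignType.sign (g.eval₂ σ₂ β) := by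
  classical
  by_cases hα : α ∈ Set.range σ₁
  · obtain ⟨e, rfl⟩ := hα
    refine ⟨σ₂ e, fun g _ => ?_⟩
    rw [Polynomial.eval₂_at_apply, Polynomial.eval₂_at_apply, hσ₁.sign_comp, hσ₂.sign_comp]
  obtain ⟨e, he⟩ := exists_forall_sign_sub_eq hσ₁ hα (G.biUnion fun g => g.roots.toFinset)
  refine ⟨σ₂ e, fun g hg => ?_⟩
  have hlift := hmax.rootsLift hR₁ hR₂ hσ₁ hσ₂ g
  refine sign_eval₂_eq_sign_eval₂ hR₁ hR₂ hσ₁ hσ₂ hlift.1 hlift.2 fun z hz => ?_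
  rw [he z (Finset.mem_biUnion.2 ⟨g, hg, Multiset.mem_toFinset.2 hz⟩), ← map_sub, hσ₂.sign_comp]

end SignMaximal

section SignCoherent

universe u₁ u₂

variable {R₁ : Type u₁} {R₂ : Type u₂} [Field R₁] [LinearOrder R₁] [Field R₂] [LinearOrder R₂]

/-- A ring of pairs on which the two coordinates always have the same sign: the graph of an
isomorphism between ordered subrings of `R₁` and `R₂`. -/
def SignCoherent (Γ : Subring (R₁ × R₂)) : Prop :=
  ∀ z ∈ Γ, SignType.sign z.1 = SignType.sign z.2

lemma SignCoherent.exists_le_maximal {Γ₀ : Subring (R₁ × R₂)} (h : SignCoherent Γ₀) :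
    ∃ Γ, Γ₀ ≤ Γ ∧ Maximal SignCoherent Γ :=
  zorn_le_nonempty₀ {Γ | SignCoherent Γ} (fun c hc hchain Γ hΓ => by
    refine ⟨sSup c, fun z hz => ?_, fun _ => le_sSup⟩
    obtain ⟨Δ, hΔ, hz⟩ := (Subring.mem_sSup_of_directedOn ⟨Γ, hΓ⟩ hchain.directedOn).1 hz
    exact hc hΔ z hz) Γ₀ h

variable {Γ : Subring (R₁ × R₂)}

lemma SignCoherent.ne_zero (h : SignCoherent Γ) {z : R₁ × R₂} (hz : z ∈ Γ) (hz0 : z ≠ 0) :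
    z.1 ≠ 0 ∧ z.2 ≠ 0 := by
  have hsign := h z hz
  refine ⟨fun h1 => hz0 (Prod.ext h1 ?_), fun h2 => hz0 (Prod.ext ?_ h2)⟩
  · rwa [h1, sign_zero, eq_comm, sign_eq_zero_iff] at hsign
  · rwa [h2, sign_zero, sign_eq_zero_iff] at hsign

lemma mem_of_maximal_signCoherent (hΓ : Maximal SignCoherent Γ) {z : R₁ × R₂}
    (hz : ∀ g : Polynomial Γ,
      SignType.sign (g.eval₂ Γ.subtype z).1 = SignType.sign (g.eval₂ Γ.subtype z).2) :
    z ∈ Γ := by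
  have hle : (Polynomial.eval₂RingHom Γ.subtype z).range ≤ Γ := by
    refine hΓ.le_of_ge ?_ fun y hy => ⟨Polynomial.C ⟨y, hy⟩, by simp⟩
    rintro _ ⟨g, rfl⟩
    exact hz g
  exact hle ⟨Polynomial.X, by simp⟩

variable [IsStrictOrderedRing R₁] [IsStrictOrderedRing R₂]

lemma inv_mem_of_maximal_signCoherent (hΓ : Maximal SignCoherent Γ) {z : R₁ × R₂} (hz : z ∈ Γ)
    (hz0 : z ≠ 0) : z⁻¹ ∈ Γ := by
  obtain ⟨h1, h2⟩ := hΓ.prop.ne_zero hz hz0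
  let _ : Invertible z⁻¹ :=
    ⟨z, Prod.ext (mul_inv_cancel₀ h1) (mul_inv_cancel₀ h2),
      Prod.ext (inv_mul_cancel₀ h1) (inv_mul_cancel₀ h2)⟩
  refine mem_of_maximal_signCoherent hΓ fun g => ?_
  have hrev : g.reverse.eval₂ Γ.subtype z ∈ Γ := by
    rw [show z = Γ.subtype ⟨z, hz⟩ from rfl, Polynomial.eval₂_at_apply]
    exact SetLike.coe_mem _
  have heval : g.eval₂ Γ.subtype z⁻¹ = g.reverse.eval₂ Γ.subtype z * z⁻¹ ^ g.natDegree :=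
    (Polynomial.eval₂_reverse_mul_pow Γ.subtype z⁻¹ g).symm
  have hsign : SignType.sign z⁻¹.1 = SignType.sign z⁻¹.2 := by
    rw [Prod.fst_inv, Prod.snd_inv,
      ← sign_eq_sign_of_mul_pos (x := z.1) (by rw [mul_inv_cancel₀ h1]; exact one_pos),
      ← sign_eq_sign_of_mul_pos (x := z.2) (by rw [mul_inv_cancel₀ h2]; exact one_pos),
      hΓ.prop z hz]
  rw [heval, Prod.fst_mul, Prod.snd_mul, Prod.pow_fst, Prod.pow_snd, sign_mul, sign_mul, sign_pow,
    sign_pow, hΓ.prop _ hrev, hsign]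

lemma isField_of_maximal_signCoherent (hΓ : Maximal SignCoherent Γ) : IsField Γ where
  exists_pair_ne := ⟨0, 1, zero_ne_one⟩
  mul_comm := mul_comm
  mul_inv_cancel := by
    rintro ⟨z, hz⟩ hne
    have hz0 : z ≠ 0 := fun h => hne (Subtype.ext h)
    obtain ⟨h1, h2⟩ := hΓ.prop.ne_zero hz hz0
    exact ⟨⟨z⁻¹, inv_mem_of_maximal_signCoherent hΓ hz hz0⟩,
      Subtype.ext (Prod.ext (mul_inv_cancel₀ h1) (mul_inv_cancel₀ h2))⟩

lemma exists_isSignMaximal_factorization {B : Type*} [CommRing B] {φ₁ : B →+* R₁} {φ₂ : B →+* R₂}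
    (hφ : ∀ b, SignType.sign (φ₁ b) = SignType.sign (φ₂ b)) :
    ∃ (E : Type (max u₁ u₂)) (_ : Field E) (ι : B →+* E) (σ₁ : E →+* R₁) (σ₂ : E →+* R₂),
      (∀ e, SignType.sign (σ₁ e) = SignType.sign (σ₂ e)) ∧ IsSignMaximal σ₁ σ₂ ∧
        σ₁.comp ι = φ₁ ∧ σ₂.comp ι = φ₂ := by
  have hrange : SignCoherent (φ₁.prod φ₂).range := by
    rintro _ ⟨b, rfl⟩
    exact hφ b
  obtain ⟨Γ, hle, hΓ⟩ := hrange.exists_le_maximal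
  let _ : Field Γ := (isField_of_maximal_signCoherent hΓ).toField
  refine ⟨Γ, inferInstance, (φ₁.prod φ₂).codRestrict Γ fun b => hle ⟨b, rfl⟩,
    (RingHom.fst R₁ R₂).comp Γ.subtype, (RingHom.snd R₁ R₂).comp Γ.subtype,
    fun e => hΓ.prop _ e.2, fun α β h => ?_, rfl, rfl⟩
  have hmem : (α, β) ∈ Γ := mem_of_maximal_signCoherent hΓ fun g => by
    have hfst := Polynomial.hom_eval₂ g Γ.subtype (RingHom.fst R₁ R₂) (α, β)
    have hsnd := Polynomial.hom_eval₂ g Γ.subtype (RingHom.snd R₁ R₂) (α, β)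
    exact (congrArg _ hfst).trans ((h g).trans (congrArg _ hsnd).symm)
  exact ⟨⟨⟨_, hmem⟩, rfl⟩, ⟨⟨_, hmem⟩, rfl⟩⟩

theorem exists_forall_sign_eval₂_eq {B : Type*} [CommRing B] (hR₁ : PolynomialIVT R₁)
    (hR₂ : PolynomialIVT R₂) {φ₁ : B →+* R₁} {φ₂ : B →+* R₂}
    (hφ : ∀ b, SignType.sign (φ₁ b) = SignType.sign (φ₂ b)) (G : Finset (Polynomial B)) (α : R₁) :
    ∃ β : R₂, ∀ g ∈ G, SignType.sign (g.eval₂ φ₁ α) = SignType.sign (g.eval₂ φ₂ β) := by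
  classical
  obtain ⟨E, _, ι, σ₁, σ₂, hσ, hmax, rfl, rfl⟩ := exists_isSignMaximal_factorization hφ
  let _ : LinearOrder E := LinearOrder.lift' σ₁ σ₁.injective
  have _ : IsStrictOrderedRing E :=
    Function.Injective.isStrictOrderedRing σ₁ (map_zero _) (map_one _) (map_add _) (map_mul _)
      Iff.rfl Iff.rfl
  have hσ₁ : StrictMono σ₁ := fun _ _ hxy => hxy
  have hσ₂ : StrictMono σ₂ := fun x y hxy => by
    rw [← sub_pos, ← map_sub, ← sign_eq_one_iff, ← hσ, hσ₁.sign_comp, sign_eq_one_iff, sub_pos]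
    exact hxy
  obtain ⟨β, hβ⟩ :=
    hmax.exists_forall_sign_eval₂_eq hR₁ hR₂ hσ₁ hσ₂ (G.image (Polynomial.map ι)) α
  refine ⟨β, fun g hg => ?_⟩
  rw [← Polynomial.eval₂_map, ← Polynomial.eval₂_map]
  exact hβ _ (Finset.mem_image_of_mem _ hg)

end SignCoherent

section ArtinLang

lemma polynomialIVT_real : PolynomialIVT ℝ := by
  intro p a b hab h
  have hcont : ContinuousOn (fun x => p.eval x) (Set.Icc a b) := p.continuous.continuousOn
  rcases mul_neg_iff.1 h with ⟨ha, hb⟩ | ⟨ha, hb⟩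
  · exact intermediate_value_Ioo' hab.le hcont ⟨hb, ha⟩
  · exact intermediate_value_Ioo hab.le hcont ⟨ha, hb⟩

variable {K : Type*} [Field K] [LinearOrder K]

section Germ

variable {I : Type*} {U : Ultrafilter I}

lemma PolynomialIVT.germ (hK : PolynomialIVT K) : PolynomialIVT ((U : Filter I).Germ K) := by
  intro p a b hab h
  let coe : (I → K) →+* (U : Filter I).Germ K := Filter.Germ.coeRingHom (U : Filter I)
  have hsurj : Function.Surjective coe := Quotient.mk_surjective
  obtain ⟨q, rfl⟩ := Polynomial.map_surjective coe hsurj p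
  obtain ⟨a, rfl⟩ := hsurj a
  obtain ⟨b, rfl⟩ := hsurj b
  have heval (c : I → K) (i : I) :
      (q.map (Pi.evalRingHom (fun _ => K) i)).eval (c i) = q.eval c i :=
    Polynomial.eval_map_apply (f := Pi.evalRingHom (fun _ => K) i) c
  rw [Polynomial.eval_map_apply, Polynomial.eval_map_apply, ← map_mul] at h
  have hroot : ∀ᶠ i in (U : Filter I), ∃ c ∈ Set.Ioo (a i) (b i),
      (q.map (Pi.evalRingHom (fun _ => K) i)).eval c = 0 := by
    filter_upwards [Filter.Germ.coe_lt.1 hab, Filter.Germ.coe_lt.1 h] with i hab h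
    refine hK _ _ _ hab ?_
    rw [heval, heval]
    exact h
  obtain ⟨c, hc⟩ := hroot.choice
  refine ⟨coe c, ⟨Filter.Germ.coe_lt.2 (hc.mono fun i hi => hi.1.1),
    Filter.Germ.coe_lt.2 (hc.mono fun i hi => hi.1.2)⟩, ?_⟩
  rw [Polynomial.eval_map_apply]
  exact Filter.Germ.coe_eq.2 (hc.mono fun i hi => (heval c i).symm.trans hi.2)

lemma eventually_sign_eq_sign_germ (f : I → K) :
    ∀ᶠ i in (U : Filter I),
      SignType.sign (f i) = SignType.sign (f : (U : Filter I).Germ K) := by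
  rcases lt_trichotomy (f : (U : Filter I).Germ K) 0 with h | h | h
  · rw [sign_neg h]
    exact (Filter.Germ.coe_lt.1 h).mono fun i => sign_neg
  · rw [h, sign_zero]
    exact (Filter.Germ.coe_eq.1 h).mono fun i => sign_eq_zero_iff.2
  · rw [sign_pos h]
    exact (Filter.Germ.coe_lt.1 h).mono fun i => sign_pos

lemma sign_germ_eq_of_eventually {f : I → K} {s : SignType}
    (h : ∀ᶠ i in (U : Filter I), SignType.sign (f i) = s) :
    SignType.sign (f : (U : Filter I).Germ K) = s := by
  obtain ⟨i, hi, his⟩ := ((eventually_sign_eq_sign_germ f).and h).exists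
  rw [← hi, his]

lemma eval₂_germ {I B K : Type*} [CommRing B] [CommRing K] (l : Filter I) (f : I → B →+* K)
    (p : Polynomial B) (y : I → K) :
    p.eval₂ ((Filter.Germ.coeRingHom l).comp (RingHom.pi f)) (y : l.Germ K) =
      ((fun i => p.eval₂ (f i) (y i) : I → K) : l.Germ K) := by
  have hpi : p.eval₂ (RingHom.pi f) y = fun i => p.eval₂ (f i) (y i) :=
    funext fun i => Polynomial.hom_eval₂ p (RingHom.pi f) (Pi.evalRingHom (fun _ => K) i) y
  rw [← hpi]
  exact (Polynomial.hom_eval₂ p (RingHom.pi f) (Filter.Germ.coeRingHom l) y).symm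

end Germ

variable [IsStrictOrderedRing K]

lemma PolynomialIVT.isSquare (hK : PolynomialIVT K) {r : K} (hr : 0 ≤ r) : IsSquare r := by
  rcases hr.eq_or_lt with rfl | hr
  · exact IsSquare.zero
  obtain ⟨s, -, hs⟩ := hK (Polynomial.X ^ 2 - Polynomial.C r) 0 (r + 1) (by positivity) (by
    simp only [Polynomial.eval_sub, Polynomial.eval_pow, Polynomial.eval_X, Polynomial.eval_C]
    exact mul_neg_of_neg_of_pos (by linarith [zero_pow (M₀ := K) two_ne_zero]) (by nlinarith))
  exact ⟨s, by simpa [sub_eq_zero, sq, eq_comm] using hs⟩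

lemma PolynomialIVT.sign_map {R : Type*} [Field R] [LinearOrder R] [IsStrictOrderedRing R]
    (hK : PolynomialIVT K) (φ : K →+* R) (r : K) :
    SignType.sign (φ r) = SignType.sign r :=
  ((ringHom_monotone (fun _ => hK.isSquare) φ).strictMono_of_injective φ.injective).sign_comp r

variable {R : Type*} [Field R] [LinearOrder R] [IsStrictOrderedRing R]

/- The points `x G` that realize the sign conditions `G` in `n` variables form a single point over
an ultrapower of `K`, to which the one-variable transfer applies. -/
theorem exists_eval_sign_eq (hK : PolynomialIVT K) (hR : PolynomialIVT R) {n : ℕ}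
    (φ : MvPolynomial (Fin n) K →+* R) (G : Finset (MvPolynomial (Fin n) K)) :
    ∃ x : Fin n → K, ∀ g ∈ G, SignType.sign (φ g) = SignType.sign (eval x g) := by
  classical
  induction n with
  | zero =>
    refine ⟨Fin.elim0, fun g _ => ?_⟩
    rw [eq_C_of_isEmpty g, eval_C]
    exact hK.sign_map (φ.comp C) _
  | succ n ih =>
    let Φ : Polynomial (MvPolynomial (Fin n) K) →+* R :=
      φ.comp (finSuccEquiv K n).symm.toRingEquiv.toRingHom
    have hΦ (g : MvPolynomial (Fin (n + 1)) K) :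
        (finSuccEquiv K n g).eval₂ (Φ.comp Polynomial.C) (Φ Polynomial.X) = φ g := by
      rw [← Polynomial.hom_eval₂, Polynomial.eval₂_C_X]
      exact congrArg φ ((finSuccEquiv K n).symm_apply_apply g)
    choose x hx using ih (Φ.comp Polynomial.C)
    let U : Ultrafilter (Finset (MvPolynomial (Fin n) K)) := Ultrafilter.of Filter.atTop
    have hsign (p : MvPolynomial (Fin n) K) : SignType.sign (Φ.comp Polynomial.C p) =
        SignType.sign ((Filter.Germ.coeRingHom (U : Filter _)).comp
          (RingHom.pi fun i => eval (x i)) p) := by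
      refine (sign_germ_eq_of_eventually ?_).symm
      filter_upwards [Ultrafilter.of_le _ (Filter.eventually_ge_atTop {p})] with i hi
      exact (hx i p (Finset.singleton_subset_iff.1 hi)).symm
    obtain ⟨β, hβ⟩ := exists_forall_sign_eval₂_eq hR hK.germ hsign (G.image (finSuccEquiv K n))
      (Φ Polynomial.X)
    obtain ⟨y, rfl⟩ := Quotient.mk_surjective β
    obtain ⟨i, hi⟩ := (((Filter.eventually_all_finset G).2 fun g _ =>
      eventually_sign_eq_sign_germ (U := U) fun i =>
        (finSuccEquiv K n g).eval₂ (eval (x i)) (y i))).exists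
    refine ⟨Fin.cons (y i) (x i), fun g hg => ?_⟩
    rw [eval_eq_eval_mv_eval', Polynomial.eval_map, hi g hg, ← eval₂_germ, ← hΦ]
    exact hβ _ (Finset.mem_image_of_mem _ hg)

end ArtinLang

section QuadraticModules

/-- A quadratic module of a commutative ring `A`, bundled as an additive submonoid: the condition
`0 ∈ M` is automatic, since `0 = 0 ^ 2 * 1`. -/
structure QuadraticModule (A : Type*) [CommRing A] extends AddSubmonoid A where
  one_mem' : 1 ∈ carrier
  sq_mul_mem' (a : A) {b : A} : b ∈ carrier → a ^ 2 * b ∈ carrier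

namespace QuadraticModule

section CommRing

variable {A : Type*} [CommRing A]

instance : SetLike (QuadraticModule A) A where
  coe M := M.carrier
  coe_injective := by rintro ⟨⟨⟨_, _⟩, _⟩, _, _⟩ ⟨⟨⟨_, _⟩, _⟩, _, _⟩ h; congr

instance : AddSubmonoidClass (QuadraticModule A) A where
  add_mem {M} := M.add_mem'
  zero_mem M := M.zero_mem'

instance : OneMemClass (QuadraticModule A) A where
  one_mem M := M.one_mem'

lemma sq_mul_mem (M : QuadraticModule A) (a : A) {b : A} (hb : b ∈ M) : a ^ 2 * b ∈ M :=
  M.sq_mul_mem' a hb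

lemma sq_mem (M : QuadraticModule A) (a : A) : a ^ 2 ∈ M := by
  simpa using M.sq_mul_mem a (one_mem M)

/-- A subsemiring containing all squares, that is, a preordering, is a quadratic module. -/
def ofSubsemiring (T : Subsemiring A) (hT : ∀ x, x ^ 2 ∈ T) : QuadraticModule A where
  toAddSubmonoid := T.toAddSubmonoid
  one_mem' := T.one_mem
  sq_mul_mem' a _ hb := T.mul_mem (hT a) hb

theorem preorderingClosure_subset {ι : Type*} [Finite ι] {M : QuadraticModule A} {g : ι → A}
    (hg : ∀ I : Finset ι, ∏ i ∈ I, g i ∈ M) :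
    (preorderingClosure (Submonoid.closure (Set.range g)) : Set A) ⊆ M := by
  classical
  have := Fintype.ofFinite ι
  intro a ha
  refine preorderingClosure_induction (motive := (· ∈ M)) ?_ (zero_mem M)
    (fun _ _ => add_mem) ha
  intro s hs x
  obtain ⟨e, rfl⟩ := Submonoid.mem_closure_range_iff_of_fintype.1 hs
  have hpow (i : ι) : g i ^ e i = (g i ^ (e i / 2)) ^ 2 * if Odd (e i) then g i else 1 := by
    split_ifs with h
    · rw [← pow_mul, ← pow_succ, mul_comm, Nat.two_mul_div_two_add_one_of_odd h]
    · rw [mul_one, ← pow_mul, Nat.div_two_mul_two_of_even (Nat.not_odd_iff_even.1 h)]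
  have hprod : ∏ i, g i ^ e i =
      (∏ i, g i ^ (e i / 2)) ^ 2 * ∏ i with Odd (e i), g i := by
    rw [Finset.prod_filter, ← Finset.prod_pow, ← Finset.prod_mul_distrib]
    exact Finset.prod_congr rfl fun i _ => hpow i
  have := M.sq_mul_mem (x * ∏ i, g i ^ (e i / 2)) (hg {i | Odd (e i)})
  rw [hprod]
  convert this using 1
  ring

end CommRing

section RealAlgebra

variable {A : Type*} [CommRing A] [Algebra ℝ A] (M : QuadraticModule A)

lemma smul_mem {r : ℝ} (hr : 0 ≤ r) {a : A} (ha : a ∈ M) : r • a ∈ M := by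
  have := M.sq_mul_mem (algebraMap ℝ A √r) ha
  rwa [← map_pow, Real.sq_sqrt hr, ← Algebra.smul_def] at this

lemma algebraMap_mem {r : ℝ} (hr : 0 ≤ r) : algebraMap ℝ A r ∈ M := by
  simpa [Algebra.smul_def] using M.smul_mem hr (one_mem M)

variable {M}

lemma algebraMap_add_mem_of_le {a : A} {r r' : ℝ} (h : algebraMap ℝ A r + a ∈ M) (hr : r ≤ r') :
    algebraMap ℝ A r' + a ∈ M := by
  have := add_mem h (M.algebraMap_mem (sub_nonneg.2 hr))
  convert this using 1
  rw [map_sub]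
  ring

lemma algebraMap_sub_mem_of_le {a : A} {r r' : ℝ} (h : algebraMap ℝ A r - a ∈ M) (hr : r ≤ r') :
    algebraMap ℝ A r' - a ∈ M := by
  rw [sub_eq_add_neg] at h ⊢
  exact algebraMap_add_mem_of_le h hr

/-- `a` is bounded with respect to `M` if `r - a` and `r + a` lie in `M` for some real `r`; in
terms of the order induced by `M`, this says `-r ≤ a ≤ r`. -/
def IsBounded (M : QuadraticModule A) (a : A) : Prop :=
  ∃ r : ℝ, algebraMap ℝ A r - a ∈ M ∧ algebraMap ℝ A r + a ∈ M

lemma isBounded_algebraMap (r : ℝ) : M.IsBounded (algebraMap ℝ A r) := by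
  refine ⟨|r|, ?_, ?_⟩
  · rw [← map_sub]
    exact M.algebraMap_mem (sub_nonneg.2 (le_abs_self r))
  · rw [← map_add]
    exact M.algebraMap_mem (by linarith [neg_abs_le r])

namespace IsBounded

lemma neg {a : A} (ha : M.IsBounded a) : M.IsBounded (-a) := by
  obtain ⟨r, hsub, hadd⟩ := ha
  exact ⟨r, by rwa [sub_neg_eq_add], by rwa [← sub_eq_add_neg]⟩

lemma add {a b : A} (ha : M.IsBounded a) (hb : M.IsBounded b) : M.IsBounded (a + b) := by
  obtain ⟨r, har, har'⟩ := ha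
  obtain ⟨s, hbs, hbs'⟩ := hb
  refine ⟨r + s, ?_, ?_⟩
  · rw [map_add, add_sub_add_comm]
    exact add_mem har hbs
  · rw [map_add, add_add_add_comm]
    exact add_mem har' hbs'

lemma smul {a : A} (ha : M.IsBounded a) {r : ℝ} (hr : 0 ≤ r) : M.IsBounded (r • a) := by
  obtain ⟨s, hsub, hadd⟩ := ha
  refine ⟨r * s, ?_, ?_⟩
  · simpa [Algebra.smul_def, mul_sub] using M.smul_mem hr hsub
  · simpa [Algebra.smul_def, mul_add] using M.smul_mem hr hadd

lemma sq {a : A} (ha : M.IsBounded a) : M.IsBounded (a ^ 2) := by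
  obtain ⟨r₀, hsub₀, hadd₀⟩ := ha
  obtain ⟨r, hr, hr₀⟩ : ∃ r, 0 < r ∧ r₀ ≤ r := ⟨|r₀| + 1, by positivity, by grind⟩
  have hsub := algebraMap_sub_mem_of_le hsub₀ hr₀
  have hadd := algebraMap_add_mem_of_le hadd₀ hr₀
  refine ⟨r ^ 2, ?_, add_mem (M.algebraMap_mem (sq_nonneg r)) (M.sq_mem a)⟩
  set ρ := algebraMap ℝ A r with hρ
  have hid : algebraMap ℝ A (r ^ 2) - a ^ 2 =
      (2 * r)⁻¹ • ((ρ - a) ^ 2 * (ρ + a) + (ρ + a) ^ 2 * (ρ - a)) := by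
    rw [eq_inv_smul_iff₀ (by positivity), Algebra.smul_def, map_mul, map_pow, map_ofNat, ← hρ]
    ring
  rw [hid]
  exact M.smul_mem (by positivity) (add_mem (M.sq_mul_mem _ hadd) (M.sq_mul_mem _ hsub))

lemma mul {a b : A} (ha : M.IsBounded a) (hb : M.IsBounded b) : M.IsBounded (a * b) := by
  have polarization : a * b = (4 : ℝ)⁻¹ • ((a + b) ^ 2 + -(a + -b) ^ 2) := by
    rw [eq_inv_smul_iff₀ four_ne_zero, Algebra.smul_def, map_ofNat]
    ring
  rw [polarization]
  exact ((ha.add hb).sq.add (ha.add hb.neg).sq.neg).smul (by norm_num)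

lemma of_sq_le {a : A} {r : ℝ} (h : algebraMap ℝ A r - a ^ 2 ∈ M) : M.IsBounded a := by
  have hhalf : algebraMap ℝ A 2⁻¹ * 2 = 1 := by
    rw [← map_ofNat (algebraMap ℝ A) 2, ← map_mul, inv_mul_cancel₀ two_ne_zero, map_one]
  refine ⟨r + 2⁻¹ ^ 2, ?_, ?_⟩
  · convert add_mem h (M.sq_mem (a - algebraMap ℝ A 2⁻¹)) using 1
    rw [map_add, map_pow]
    linear_combination a * hhalf
  · convert add_mem h (M.sq_mem (a + algebraMap ℝ A 2⁻¹)) using 1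
    rw [map_add, map_pow]
    linear_combination (-a) * hhalf

end IsBounded

/-- The elements that are bounded with respect to a quadratic module form a subalgebra. -/
def boundedSubalgebra (M : QuadraticModule A) : Subalgebra ℝ A where
  carrier := {a | M.IsBounded a}
  add_mem' := IsBounded.add
  mul_mem' := IsBounded.mul
  algebraMap_mem' := isBounded_algebraMap

theorem isBounded_of_sub_sum_sq_mem {σ : Type*} [Fintype σ]
    {M : QuadraticModule (MvPolynomial σ ℝ)} {r : ℝ}
    (h : algebraMap ℝ _ r - ∑ i, X i ^ 2 ∈ M) (p : MvPolynomial σ ℝ) : M.IsBounded p := by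
  classical
  suffices hle : Algebra.adjoin ℝ (Set.range X) ≤ M.boundedSubalgebra from
    hle (adjoin_range_X (R := ℝ) (σ := σ) ▸ Algebra.mem_top)
  rw [Algebra.adjoin_le_iff]
  rintro _ ⟨i, rfl⟩
  have hrest : ∑ j ∈ Finset.univ.erase i, X j ^ 2 ∈ M := sum_mem fun j _ => M.sq_mem _
  refine IsBounded.of_sq_le (r := r) ?_
  convert add_mem h hrest using 1
  rw [← Finset.add_sum_erase _ _ (Finset.mem_univ i)]
  ring

end RealAlgebra

end QuadraticModule

open QuadraticModule in
/- A certificate `(r - σ) t = 1 + s` for `σ < r` does not by itself put `r - σ` into `T`, but it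
gives `(1 + s) (r - σ) ∈ T`. As `s` is bounded by some `k` modulo `T + (r - σ) T`, this yields
first `(1 + s) (k - s) ∈ T`, so that `s` is bounded modulo `T`, and then a bound for `σ`. -/
theorem exists_algebraMap_sub_mem_of_certificate {A : Type*} [CommRing A] [Algebra ℝ A]
    {T : Subsemiring A} (hT : ∀ x, x ^ 2 ∈ T) {r : ℝ} (hr : 0 ≤ r) {σ s t : A} (hσ : σ ∈ T)
    (hs : s ∈ T) (ht : t ∈ T) (hst : (algebraMap ℝ A r - σ) * t = 1 + s)
    (hbdd : (ofSubsemiring (adjoinElement T hT (algebraMap ℝ A r - σ))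
      fun x => le_adjoinElement T hT _ (hT x)).IsBounded s) :
    ∃ r' : ℝ, algebraMap ℝ A r' - σ ∈ T := by
  obtain ⟨k, ⟨a, ha, b, hb, hab⟩, -⟩ := hbdd
  set f := algebraMap ℝ A r - σ with hf
  have h1s : 1 + s ∈ T := add_mem T.one_mem hs
  have hsf : (1 + s) * f ∈ T := by
    rw [← hst, mul_right_comm, ← sq]
    exact mul_mem (hT f) ht
  have hsk : (1 + s) * (algebraMap ℝ A k - s) ∈ T := by
    rw [hab, mul_add, ← mul_assoc]
    exact add_mem (mul_mem h1s ha) (mul_mem hsf hb)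
  have hs_le : algebraMap ℝ A (k + (k / 2) ^ 2) - s ∈ T := by
    convert add_mem hsk (hT (s - algebraMap ℝ A (k / 2))) using 1
    have hk : algebraMap ℝ A k = algebraMap ℝ A (k / 2) * 2 := by
      rw [← map_ofNat (algebraMap ℝ A) 2, ← map_mul, div_mul_cancel₀ k two_ne_zero]
    rw [map_add, map_pow]
    linear_combination (-s) * hk
  have hrs_le : algebraMap ℝ A r * (algebraMap ℝ A (k + (k / 2) ^ 2) - s) ∈ T :=
    mul_mem ((ofSubsemiring T hT).algebraMap_mem hr) hs_le
  refine ⟨r + r * (k + (k / 2) ^ 2), ?_⟩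
  convert add_mem (add_mem hsf (mul_mem hs hσ)) hrs_le using 1
  rw [map_add, map_mul, hf]
  ring

end QuadraticModules

section Positivstellensatz

/- The Krivine–Stengle Positivstellensatz. Without a certificate, some ordering contains `-f` and
all `g i`, and a point realizing the signs of `f` and of the `g i` in this ordering contradicts the
hypothesis. -/
theorem exists_mul_eq_one_add_of_forall_eval_pos {K : Type*} [Field K] [LinearOrder K]
    [IsStrictOrderedRing K] (hK : PolynomialIVT K) {ι : Type*} [Finite ι] {n : ℕ}
    (g : ι → MvPolynomial (Fin n) K)
    {f : MvPolynomial (Fin n) K} (hf : ∀ x, (∀ i, 0 ≤ eval x (g i)) → 0 < eval x f) :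
    ∃ s ∈ preorderingClosure (Submonoid.closure (Set.range g)),
      ∃ t ∈ preorderingClosure (Submonoid.closure (Set.range g)), f * t = 1 + s := by
  classical
  have := Fintype.ofFinite ι
  set T := preorderingClosure (Submonoid.closure (Set.range g))
  have hT : ∀ x, x ^ 2 ∈ T := sq_mem_preorderingClosure _
  by_contra! hcon
  have hneg : -1 ∉ adjoinElement T hT (-f) := by
    rintro ⟨s, hs, t, ht, h⟩
    exact hcon s hs t ht (by linear_combination h)
  obtain ⟨O, hTO, hO⟩ :=
    exists_isOrdering_ge (fun x => le_adjoinElement T hT (-f) (hT x)) hneg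
  obtain ⟨R, _, _, _, hR, φ, hφ⟩ := exists_polynomialIVT_field_of_isOrdering hO
  obtain ⟨x, hx⟩ := exists_eval_sign_eq hK hR φ (insert f (Finset.univ.image g))
  have hg (i : ι) : 0 ≤ eval x (g i) := by
    have hgT : g i ∈ T :=
      mem_preorderingClosure_of_mem (Submonoid.subset_closure (Set.mem_range_self i))
    have hφg : 0 ≤ φ (g i) := hφ _ (hTO (le_adjoinElement T hT (-f) hgT))
    rwa [← sign_nonneg_iff, ← hx (g i) (by simp), sign_nonneg_iff]
  have hφf : 0 < φ f := by
    rw [← sign_eq_one_iff, hx f (by simp), sign_eq_one_iff]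
    exact hf x hg
  have hφf' : 0 ≤ φ (-f) := hφ _ (hTO (self_mem_adjoinElement T hT (-f)))
  rw [map_neg] at hφf'
  linarith

end Positivstellensatz

section Archimedean

variable {n : ℕ}

/-- The bundled form of `IsQuadraticModule`. -/
def QuadraticModule.ofIsQuadraticModule {M : Set (MvPolynomial (Fin n) ℝ)}
    (hM : IsQuadraticModule M) : QuadraticModule (MvPolynomial (Fin n) ℝ) where
  carrier := M
  add_mem' ha hb := hM.2.1 _ ha _ hb
  zero_mem' := by simpa using hM.2.2 0 1 hM.1
  one_mem' := hM.1
  sq_mul_mem' a _ hb := hM.2.2 a _ hb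

lemma IsArchimedeanQM.of_forall_isBounded {M : QuadraticModule (MvPolynomial (Fin n) ℝ)}
    (h : ∀ p, M.IsBounded p) : IsArchimedeanQM (M : Set (MvPolynomial (Fin n) ℝ)) := by
  intro p
  obtain ⟨r, hr, -⟩ := h p
  obtain ⟨N, hN⟩ := exists_nat_ge r
  exact ⟨N, by simpa using QuadraticModule.algebraMap_sub_mem_of_le hr hN⟩

lemma isCompact_setOf_sum_sq_le {ι : Type*} [Fintype ι] (r : ℝ) :
    IsCompact {x : ι → ℝ | ∑ i, x i ^ 2 ≤ r} := by
  refine (isCompact_Icc (a := fun _ => -√r) (b := fun _ => √r)).of_isClosed_subset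
    (isClosed_le (by fun_prop) continuous_const) fun x hx => ?_
  have hle (i : ι) : |x i| ≤ √r := Real.abs_le_sqrt <|
    (Finset.single_le_sum (fun j _ => sq_nonneg (x j)) (Finset.mem_univ i)).trans hx
  exact ⟨fun i => (abs_le.1 (hle i)).1, fun i => (abs_le.1 (hle i)).2⟩

lemma exists_forall_eval_lt_of_isCompact {σ : Type*} {S : Set (σ → ℝ)} (hS : IsCompact S)
    (p : MvPolynomial σ ℝ) : ∃ r : ℝ, 0 ≤ r ∧ ∀ x ∈ S, eval x p < r := by
  obtain ⟨B, hB⟩ := hS.bddAbove_image (MvPolynomial.continuous_eval p).continuousOn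
  refine ⟨|B| + 1, by positivity, fun x hx => ?_⟩
  have := hB (Set.mem_image_of_mem _ hx)
  linarith [le_abs_self B]

theorem exists_algebraMap_sub_sum_sq_mem {m : ℕ} {g : Fin m → MvPolynomial (Fin n) ℝ}
    (hg : IsCompact (SolSet g)) :
    ∃ r : ℝ, algebraMap ℝ _ r - ∑ i, X i ^ 2 ∈
      preorderingClosure (Submonoid.closure (Set.range g)) := by
  set T := preorderingClosure (Submonoid.closure (Set.range g))
  have hT : ∀ x, x ^ 2 ∈ T := sq_mem_preorderingClosure _
  set σ : MvPolynomial (Fin n) ℝ := ∑ i, X i ^ 2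
  obtain ⟨r, hr, hσr⟩ := exists_forall_eval_lt_of_isCompact hg σ
  obtain ⟨s, hs, t, ht, hst⟩ := exists_mul_eq_one_add_of_forall_eval_pos polynomialIVT_real g
    (f := algebraMap ℝ _ r - σ) fun x hx => by simpa [algebraMap_eq] using hσr x hx
  exact exists_algebraMap_sub_mem_of_certificate hT hr (sum_mem fun i _ => hT (X i)) hs ht hst
    (QuadraticModule.isBounded_of_sub_sum_sq_mem (self_mem_adjoinElement T hT _) s)

theorem isArchimedeanQM_of_isCompact {M : Set (MvPolynomial (Fin n) ℝ)}
    (hM : IsQuadraticModule M) {m : ℕ} {g : Fin m → MvPolynomial (Fin n) ℝ}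
    (hg : IsCompact (SolSet g)) (hgM : ∀ I : Finset (Fin m), ∏ i ∈ I, g i ∈ M) :
    IsArchimedeanQM M := by
  obtain ⟨r, hr⟩ := exists_algebraMap_sub_sum_sq_mem hg
  have hrM : algebraMap ℝ _ r - ∑ i, X i ^ 2 ∈ QuadraticModule.ofIsQuadraticModule hM :=
    QuadraticModule.preorderingClosure_subset hgM hr
  exact .of_forall_isBounded (QuadraticModule.isBounded_of_sub_sum_sq_mem hrM)

theorem IsArchimedeanQM.exists_isCompact {M : Set (MvPolynomial (Fin n) ℝ)}
    (hM : IsArchimedeanQM M) : ∃ g ∈ M, IsCompact {x : Fin n → ℝ | 0 ≤ eval x g} := by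
  obtain ⟨N, hN⟩ := hM (∑ i, X i ^ 2)
  exact ⟨_, hN, by simpa using isCompact_setOf_sum_sq_le (ι := Fin n) (N : ℝ)⟩

lemma exists_isCompact_solSet_forall_prod_mem {M : Set (MvPolynomial (Fin n) ℝ)} (h1 : 1 ∈ M)
    {g : MvPolynomial (Fin n) ℝ} (hg : g ∈ M) (hc : IsCompact {x | 0 ≤ eval x g}) :
    ∃ (m : ℕ) (g : Fin m → MvPolynomial (Fin n) ℝ),
      IsCompact (SolSet g) ∧ ∀ I : Finset (Fin m), ∏ i ∈ I, g i ∈ M := by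
  refine ⟨1, fun _ => g, by simpa [SolSet] using hc, fun I => ?_⟩
  rcases Finset.subset_singleton_iff.1 (I.subset_univ : I ⊆ {0}) with rfl | rfl
  · simpa using h1
  · simpa using hg

end Archimedean

theorem stmt_1 {n : ℕ} (M : Set (MvPolynomial (Fin n) ℝ)) (hM : IsQuadraticModule M) :
    ((∃ (m : ℕ) (g : Fin m → MvPolynomial (Fin n) ℝ),
        IsCompact (SolSet g) ∧ ∀ I : Finset (Fin m), (∏ i ∈ I, g i) ∈ M) ↔
      IsArchimedeanQM M) ∧
    ((∃ g ∈ M, IsCompact {x : Fin n → ℝ | 0 ≤ eval x g}) ↔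
      IsArchimedeanQM M) := by
  have tuple_to_archimedean : (∃ (m : ℕ) (g : Fin m → MvPolynomial (Fin n) ℝ),
      IsCompact (SolSet g) ∧ ∀ I : Finset (Fin m), (∏ i ∈ I, g i) ∈ M) →
      IsArchimedeanQM M := fun ⟨_, _, hg, hgM⟩ => isArchimedeanQM_of_isCompact hM hg hgM
  have single_to_tuple : (∃ g ∈ M, IsCompact {x : Fin n → ℝ | 0 ≤ eval x g}) →
      ∃ (m : ℕ) (g : Fin m → MvPolynomial (Fin n) ℝ),
        IsCompact (SolSet g) ∧ ∀ I : Finset (Fin m), (∏ i ∈ I, g i) ∈ M :=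
    fun ⟨_, hg, hc⟩ => exists_isCompact_solSet_forall_prod_mem hM.1 hg hc
  exact ⟨⟨tuple_to_archimedean, fun h => single_to_tuple h.exists_isCompact⟩,
    ⟨fun h => tuple_to_archimedean (single_to_tuple h), fun h => h.exists_isCompact⟩⟩
end
end

section
/- Fix C, d, k, m, n ∈ ℕ and fix any norm ‖·‖ on the finite-dimensional real vector space of k×k matrix polynomials with entries in ℝ[X_1,…,X_n] of degree at most d. Let g = (g_1,…,g_m) ∈ ℝ[X_1,…,X_n]^m be such that the quadratic module M(g) is Archimedean. Then there exists e ∈ ℕ₀ such that every symmetric matrix polynomial H ∈ ℝ[X_1,…,X_n]_d^{k×k} satisfying ‖H‖ ≤ C and H(x) ⪰ (1/C)·I_k for all x ∈ S(g) lies in M_e^{k×k}(g). -/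
open MvPolynomial Matrix

noncomputable section

/-- The extended tuple `(g₀, g₁, …, g_m)` with `g₀ := 1`. -/
def withOne {n m : ℕ} (g : Fin m → MvPolynomial (Fin n) ℝ) :
    Fin (m + 1) → MvPolynomial (Fin n) ℝ :=
  Fin.cons 1 g

/-- A polynomial is a sum of squares. -/
def IsSOS {n : ℕ} (p : MvPolynomial (Fin n) ℝ) : Prop :=
  ∃ (l : ℕ) (q : Fin l → MvPolynomial (Fin n) ℝ), p = ∑ i, q i ^ 2

/-- The quadratic module `M(g)` generated by `g₁,…,g_m` (with `g₀ := 1`). -/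
def QM {n m : ℕ} (g : Fin m → MvPolynomial (Fin n) ℝ) : Set (MvPolynomial (Fin n) ℝ) :=
  {f | ∃ s : Fin (m + 1) → MvPolynomial (Fin n) ℝ,
    (∀ i, IsSOS (s i)) ∧ f = ∑ i, s i * withOne g i}

/-- `p ∈ ℝ[X]_{r_i}` where `r_i = (d - deg g_i)/2` if `g_i ≠ 0` and `r_i = -∞` if `g_i = 0`:
either `p = 0`, or `g_i ≠ 0` and `2 deg p + deg g_i ≤ d`. -/
def DegOK {n : ℕ} (d : ℕ) (gi p : MvPolynomial (Fin n) ℝ) : Prop :=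
  p = 0 ∨ (gi ≠ 0 ∧ 2 * p.totalDegree + gi.totalDegree ≤ d)

/-- The `d`-truncated `k×k` matricial quadratic module `M_d^{k×k}(g)`. -/
def MatTruncQM {n : ℕ} (d : ℕ) {m : ℕ} (g : Fin m → MvPolynomial (Fin n) ℝ) (k : ℕ) :
    Set (Matrix (Fin k) (Fin k) (MvPolynomial (Fin n) ℝ)) :=
  {H | ∃ (N : ℕ) (P : Fin (m + 1) → Fin N → Matrix (Fin k) (Fin k) (MvPolynomial (Fin n) ℝ)),
    (∀ i j a b, DegOK d (withOne g i) (P i j a b)) ∧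
    H = ∑ i, ∑ j, withOne g i • ((P i j)ᵀ * P i j)}

/-!
Let `P` be the cone of matrix polynomials whose symmetrization lies in the matricial quadratic
module of `g`. Since `QM g` is Archimedean, the identity matrix is an order unit of `P`, so a matrix
polynomial outside `P` is mapped to a nonpositive number by some pure state `L`, i.e. by an extreme
point of the compact convex set of states. The cone `P` is stable under multiplication by squares
`r ^ 2`; log-convexity of the moments `j ↦ L (r ^ (2 * j) • A)` shows that `A ↦ L (r ^ 2 • A)` is
bounded on `P` by a multiple of `L`, hence proportional to `L` by extremality. So
`L (r • A) = φ r * L A` for an algebra homomorphism `φ`, which is the evaluation at a point of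
`SolSet g`, and matrix polynomials that are positive definite on `SolSet g` lie in `P`.

For the uniform degree bound, write `P` as the increasing union of its truncations. Since `1` is an
order unit, some truncation contains `δ • 1 + H` for all `H` in a neighbourhood of zero of the
finite-dimensional space of matrix polynomials of degree at most `d`. Covering the bounded set in
question by finitely many translates of this neighbourhood and using half of the lower bound `1 / C`
as `δ` yields one truncation that contains all of it.
-/

open scoped Topology

section OrderUnit

variable {E : Type*} [AddCommGroup E] [Module ℝ E] {P : PointedCone ℝ E} {u : E}

/-- An order unit of a convex cone `P`: an element of `P` of which some multiple dominates any given
vector in the preorder `A ≤ B ↔ B - A ∈ P`. -/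
structure IsOrderUnit (P : PointedCone ℝ E) (u : E) : Prop where
  mem : u ∈ P
  exists_smul_sub_mem : ∀ A, ∃ c : ℝ, c • u - A ∈ P

/-- The states of the cone `P` with order unit `u`: the linear functionals that are nonnegative on
`P` and normalized at `u`. The pure states are its extreme points. -/
def stateSpace (P : PointedCone ℝ E) (u : E) : Set (Module.Dual ℝ E) :=
  {L | (∀ A ∈ P, 0 ≤ L A) ∧ L u = 1}

theorem IsOrderUnit.exists_pos (hu : IsOrderUnit P u) (A : E) : ∃ c : ℝ, 0 < c ∧ c • u - A ∈ P := by
  obtain ⟨c, hc⟩ := hu.exists_smul_sub_mem A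
  refine ⟨|c| + 1, by positivity, ?_⟩
  have h : 0 ≤ |c| + 1 - c := by linarith [le_abs_self c]
  convert P.add_mem hc (P.smul_mem h hu.mem) using 1
  module

theorem IsOrderUnit.exists_sub_mem_and_add_mem (hu : IsOrderUnit P u) (A : E) :
    ∃ c : ℝ, c • u - A ∈ P ∧ c • u + A ∈ P := by
  obtain ⟨c₁, hc₁, hsub⟩ := hu.exists_pos A
  obtain ⟨c₂, hc₂, hadd⟩ := hu.exists_pos (-A)
  refine ⟨c₁ + c₂, ?_, ?_⟩
  · convert P.add_mem hsub (P.smul_mem hc₂.le hu.mem) using 1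
    module
  · convert P.add_mem hadd (P.smul_mem hc₁.le hu.mem) using 1
    module

theorem eq_zero_of_nonneg_of_apply_orderUnit_eq_zero (hu : IsOrderUnit P u) {L : Module.Dual ℝ E}
    (hL : ∀ A ∈ P, 0 ≤ L A) (hLu : L u = 0) : L = 0 := by
  have apply_nonpos (A : E) : L A ≤ 0 := by
    obtain ⟨c, hc⟩ := hu.exists_smul_sub_mem A
    simpa [hLu] using hL _ hc
  ext A
  refine (apply_nonpos A).antisymm ?_
  simpa using apply_nonpos (-A)

theorem mem_of_neg_smul_orderUnit_add_mem (hu : IsOrderUnit P u) {H : E} {c t : ℝ} (hc : c < 0)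
    (ht : 0 ≤ t) (h : c • u + t • H ∈ P) : H ∈ P := by
  obtain ⟨M, hM, hMH⟩ := hu.exists_pos (-H)
  have hdiv : 0 ≤ M / -c := div_nonneg hM.le (neg_nonneg.2 hc.le)
  have hs : 0 < M / -c * t + 1 := by positivity
  have hmem : (M / -c * t + 1) • H ∈ P := by
    convert P.add_mem (P.smul_mem hdiv h) hMH using 1
    have := hc.ne
    match_scalars <;> field_simp
    ring
  exact (P.smul_mem_iff hs).1 hmem

theorem mem_sup_hull_neg_iff {H A : E} :
    A ∈ P ⊔ PointedCone.hull ℝ {-H} ↔ ∃ t : ℝ, 0 ≤ t ∧ A + t • H ∈ P := by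
  simp only [Submodule.mem_sup, PointedCone.hull, Submodule.mem_span_singleton]
  constructor
  · rintro ⟨B, hB, _, ⟨⟨t, ht⟩, rfl⟩, rfl⟩
    exact ⟨t, ht, by simpa [Nonneg.mk_smul] using hB⟩
  · rintro ⟨t, ht, h⟩
    exact ⟨_, h, _, ⟨⟨t, ht⟩, rfl⟩, by simp [Nonneg.mk_smul]⟩

theorem exists_mem_stateSpace_apply_nonpos (hu : IsOrderUnit P u) {H : E} (hH : H ∉ P) :
    ∃ L ∈ stateSpace P u, L H ≤ 0 := by
  have hu0 : u ≠ 0 := by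
    rintro rfl
    obtain ⟨c, hc⟩ := hu.exists_smul_sub_mem (-H)
    exact hH (by simpa using hc)
  -- A functional is nonnegative on `P` and nonpositive at `H` once it is nonnegative on the cone
  -- generated by `P` and `-H`; Riesz' theorem extends `c • u ↦ c` to such a functional.
  obtain ⟨L, hLu, hL⟩ := riesz_extension (P ⊔ PointedCone.hull ℝ {-H})
    (LinearPMap.mkSpanSingleton u (1 : ℝ) hu0)
    (by
      rintro ⟨_, hx⟩ hmem
      obtain ⟨c, rfl⟩ := Submodule.mem_span_singleton.1 hx
      obtain ⟨t, ht, h⟩ := mem_sup_hull_neg_iff.1 hmem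
      have apply_eq : LinearPMap.mkSpanSingleton u (1 : ℝ) hu0 ⟨c • u, hx⟩ = c := by
        simpa using LinearPMap.mkSpanSingleton'_apply (σ := RingHom.id ℝ) u (1 : ℝ) _ c hx
      rw [apply_eq]
      by_contra! hc
      exact hH (mem_of_neg_smul_orderUnit_add_mem hu hc ht h))
    (by
      intro A
      obtain ⟨c, hc⟩ := hu.exists_smul_sub_mem (-A)
      refine ⟨⟨c • u, Submodule.mem_span_singleton.2 ⟨c, rfl⟩⟩, ?_⟩
      exact Submodule.mem_sup_left (by simpa using hc))
  refine ⟨L, ⟨fun A hA ↦ hL A (Submodule.mem_sup_left hA), ?_⟩, ?_⟩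
  · exact (hLu ⟨u, Submodule.mem_span_singleton_self u⟩).trans
      (LinearPMap.mkSpanSingleton_apply ℝ ℝ hu0 (1 : ℝ))
  · simpa using hL (-H) (mem_sup_hull_neg_iff.2 ⟨1, zero_le_one, by simp⟩)

theorem isCompact_image_ltoFun_stateSpace (hu : IsOrderUnit P u) :
    IsCompact (LinearMap.ltoFun ℝ E ℝ ℝ '' stateSpace P u) := by
  choose c hc using hu.exists_smul_sub_mem
  have apply_le {L} (hL : L ∈ stateSpace P u) (A : E) : L A ≤ c A := by
    simpa [hL.2] using hL.1 _ (hc A)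
  refine (isCompact_univ_pi fun A ↦ isCompact_Icc (a := -c (-A)) (b := c A)).of_isClosed_subset
    ?_ ?_
  · have image_eq : LinearMap.ltoFun ℝ E ℝ ℝ '' stateSpace P u =
        Set.range (fun L : E →ₗ[ℝ] ℝ ↦ (L : E → ℝ)) ∩
          ({f | ∀ A ∈ P, 0 ≤ f A} ∩ {f | f u = 1}) := by
      ext f
      constructor
      · rintro ⟨L, hL, rfl⟩
        exact ⟨⟨L, rfl⟩, hL⟩
      · rintro ⟨⟨L, rfl⟩, hL⟩
        exact ⟨L, hL, rfl⟩
    rw [image_eq]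
    refine (LinearMap.isClosed_range_coe E ℝ _).inter (.inter ?_ ?_)
    · simp only [Set.ofPred_forall]
      exact isClosed_biInter fun A _ ↦ isClosed_le continuous_const (continuous_apply A)
    · exact isClosed_eq (continuous_apply u) continuous_const
  · rintro _ ⟨L, hL, rfl⟩ A -
    exact ⟨by simpa using neg_le_neg (apply_le hL (-A)), apply_le hL A⟩

theorem exists_mem_extremePoints_isMinOn {F : Type*} [AddCommGroup F] [Module ℝ F]
    [TopologicalSpace F] [T2Space F] [IsTopologicalAddGroup F] [ContinuousSMul ℝ F]
    [LocallyConvexSpace ℝ F] {s : Set F} (hs : IsCompact s) (hne : s.Nonempty) (f : F →L[ℝ] ℝ) :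
    ∃ x ∈ s.extremePoints ℝ, IsMinOn f s x := by
  have exposed : IsExposed ℝ s {x ∈ s | ∀ y ∈ s, f x ≤ f y} := fun _ ↦ ⟨-f, by simp⟩
  obtain ⟨x₀, hx₀, hmin⟩ := hs.exists_isMinOn hne f.continuous.continuousOn
  obtain ⟨x, hx⟩ := (exposed.isCompact hs).extremePoints_nonempty ⟨x₀, hx₀, hmin⟩
  exact ⟨x, exposed.isExtreme.extremePoints_subset_extremePoints hx, hx.1.2⟩

theorem mem_extremePoints_of_apply_mem_extremePoints_image {F G : Type*} [AddCommGroup F]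
    [Module ℝ F] [AddCommGroup G] [Module ℝ G] {f : F →ₗ[ℝ] G} (hf : Function.Injective f)
    {s : Set F} {x : F} (hx : f x ∈ (f '' s).extremePoints ℝ) : x ∈ s.extremePoints ℝ := by
  rw [mem_extremePoints_iff_left] at hx ⊢
  refine ⟨hf.mem_set_image.1 hx.1, fun y hy z hz hxyz ↦ hf ?_⟩
  refine hx.2 (f y) (Set.mem_image_of_mem f hy) (f z) (Set.mem_image_of_mem f hz) ?_
  exact (image_openSegment ℝ f.toAffineMap y z).subset (Set.mem_image_of_mem f hxyz)

theorem exists_mem_extremePoints_stateSpace_apply_nonpos (hu : IsOrderUnit P u) {H : E}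
    (hH : H ∉ P) : ∃ L ∈ (stateSpace P u).extremePoints ℝ, L H ≤ 0 := by
  obtain ⟨L₀, hL₀, hL₀H⟩ := exists_mem_stateSpace_apply_nonpos hu hH
  obtain ⟨_, hext, hmin⟩ := exists_mem_extremePoints_isMinOn (isCompact_image_ltoFun_stateSpace hu)
    ⟨_, L₀, hL₀, rfl⟩ (ContinuousLinearMap.proj H)
  obtain ⟨L, -, rfl⟩ := hext.1
  exact ⟨L, mem_extremePoints_of_apply_mem_extremePoints_image DFunLike.coe_injective hext,
    (hmin (Set.mem_image_of_mem _ hL₀)).trans hL₀H⟩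

theorem eq_smul_of_mem_extremePoints_stateSpace (hu : IsOrderUnit P u) {L L₁ : Module.Dual ℝ E}
    (hL : L ∈ (stateSpace P u).extremePoints ℝ) (h₁ : ∀ A ∈ P, 0 ≤ L₁ A)
    (hle : ∀ A ∈ P, L₁ A ≤ L A) : L₁ = L₁ u • L := by
  have h₂ : ∀ A ∈ P, 0 ≤ (L - L₁) A := fun A hA ↦ sub_nonneg.2 (hle A hA)
  have apply_u : (L - L₁) u = 1 - L₁ u := by simp [hL.1.2]
  rcases (h₁ u hu.mem).eq_or_lt with hzero | hpos
  · rw [← hzero, zero_smul]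
    exact eq_zero_of_nonneg_of_apply_orderUnit_eq_zero hu h₁ hzero.symm
  rcases ((hle u hu.mem).trans_eq hL.1.2).eq_or_lt with hone | hlt
  · have : L - L₁ = 0 :=
      eq_zero_of_nonneg_of_apply_orderUnit_eq_zero hu h₂ (by rw [apply_u, hone, sub_self])
    rw [hone, one_smul, sub_eq_zero.1 this]
  have hpos' : 0 < 1 - L₁ u := sub_pos.2 hlt
  have mem₁ : (L₁ u)⁻¹ • L₁ ∈ stateSpace P u :=
    ⟨fun A hA ↦ mul_nonneg (inv_nonneg.2 hpos.le) (h₁ A hA), inv_mul_cancel₀ hpos.ne'⟩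
  have mem₂ : (1 - L₁ u)⁻¹ • (L - L₁) ∈ stateSpace P u :=
    ⟨fun A hA ↦ mul_nonneg (inv_nonneg.2 hpos'.le) (h₂ A hA), by
      rw [LinearMap.smul_apply, apply_u, smul_eq_mul, inv_mul_cancel₀ hpos'.ne']⟩
  have mem_segment : L ∈ openSegment ℝ ((L₁ u)⁻¹ • L₁) ((1 - L₁ u)⁻¹ • (L - L₁)) := by
    refine ⟨L₁ u, 1 - L₁ u, hpos, hpos', by ring, ?_⟩
    rw [smul_inv_smul₀ hpos.ne', smul_inv_smul₀ hpos'.ne', add_sub_cancel]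
  rw [← (mem_extremePoints_iff_left.1 hL).2 _ mem₁ _ mem₂ mem_segment, smul_inv_smul₀ hpos.ne']

end OrderUnit

section LogConvex

variable {𝕜 : Type*} [Field 𝕜] [LinearOrder 𝕜] [IsStrictOrderedRing 𝕜]

theorem le_of_forall_pow_le_mul_pow [Archimedean 𝕜] {a b D : 𝕜} (hb : 0 < b)
    (h : ∀ j : ℕ, a ^ j ≤ D * b ^ j) : a ≤ b := by
  by_contra! hab
  obtain ⟨j, hj⟩ := pow_unbounded_of_one_lt D ((one_lt_div hb).2 hab)
  rw [div_pow, lt_div_iff₀ (pow_pos hb j)] at hj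
  exact hj.not_ge (h j)

theorem mul_le_mul_succ_of_sq_le_mul {w : ℕ → 𝕜} (h0 : ∀ j, 0 ≤ w j)
    (hw : ∀ j, w (j + 1) ^ 2 ≤ w j * w (j + 2)) (j : ℕ) : w 1 * w j ≤ w 0 * w (j + 1) := by
  induction j with
  | zero => exact (mul_comm _ _).le
  | succ j ih =>
    rcases (h0 j).eq_or_lt with hj | hj
    · have : w (j + 1) = 0 := by simpa [← hj, sq_nonpos_iff] using hw j
      rw [this, mul_zero]
      exact mul_nonneg (h0 0) (h0 _)
    · refine le_of_mul_le_mul_left ?_ hj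
      calc w j * (w 1 * w (j + 1)) = w 1 * w j * w (j + 1) := by ring
        _ ≤ w 0 * w (j + 1) * w (j + 1) := by gcongr; exact h0 _
        _ = w 0 * w (j + 1) ^ 2 := by ring
        _ ≤ w 0 * (w j * w (j + 2)) := by gcongr; exacts [h0 0, hw j]
        _ = w j * (w 0 * w (j + 2)) := by ring

theorem apply_one_le_mul_apply_zero_of_sq_le_mul [Archimedean 𝕜] {w : ℕ → 𝕜} {D N : 𝕜} (hN : 0 < N)
    (h0 : ∀ j, 0 ≤ w j) (hw : ∀ j, w (j + 1) ^ 2 ≤ w j * w (j + 2))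
    (hgrowth : ∀ j, w j ≤ D * N ^ j) : w 1 ≤ N * w 0 := by
  rcases (h0 0).eq_or_lt with hzero | hpos
  · have : w 1 = 0 := by simpa [← hzero, sq_nonpos_iff] using hw 0
    rw [this, ← hzero, mul_zero]
  have geom_le (j : ℕ) : (w 1 / w 0) ^ j * w 0 ≤ w j := by
    induction j with
    | zero => simp
    | succ j ih =>
      calc (w 1 / w 0) ^ (j + 1) * w 0 = w 1 / w 0 * ((w 1 / w 0) ^ j * w 0) := by ring
        _ ≤ w 1 / w 0 * w j := by gcongr; exact div_nonneg (h0 1) hpos.le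
        _ = w 1 * w j / w 0 := by ring
        _ ≤ w (j + 1) := (div_le_iff₀' hpos).2 (mul_le_mul_succ_of_sq_le_mul h0 hw j)
  have ratio_le : w 1 / w 0 ≤ N := le_of_forall_pow_le_mul_pow (D := D / w 0) hN fun j ↦ by
    rw [div_mul_eq_mul_div, le_div_iff₀ hpos]
    exact (geom_le j).trans (hgrowth j)
  exact (div_le_iff₀ hpos).1 ratio_le

end LogConvex

section Multiplicativity

variable {R E : Type*} [CommRing R] [Algebra ℝ R] [AddCommGroup E] [Module ℝ E] [Module R E]
  [IsScalarTower ℝ R E] {P : PointedCone ℝ E} {u A : E} {L : Module.Dual ℝ E}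

theorem sq_apply_smul_le_mul (hL : ∀ r : R, 0 ≤ L (r ^ 2 • A)) (s : R) :
    L (s • A) ^ 2 ≤ L A * L (s ^ 2 • A) := by
  have quadratic_nonneg (x : ℝ) : 0 ≤ L A * (x * x) + -2 * L (s • A) * x + L (s ^ 2 • A) := by
    have expand : (s - algebraMap ℝ R x) ^ 2 • A =
        (x * x) • A + (-2 * x) • (s • A) + s ^ 2 • A := by
      simp only [← algebraMap_smul R (_ : ℝ) (_ : E), map_mul, map_neg, map_ofNat]
      module
    have h := hL (s - algebraMap ℝ R x)
    rw [expand, map_add, map_add, map_smul, map_smul, smul_eq_mul, smul_eq_mul] at h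
    linarith
  have h := discrim_le_zero quadratic_nonneg
  rw [discrim] at h
  linarith

theorem apply_sq_smul_le_mul (hsq : ∀ (r : R), ∀ B ∈ P, r ^ 2 • B ∈ P) (hu : IsOrderUnit P u)
    (hL : ∀ B ∈ P, 0 ≤ L B) {r : R} {N : ℝ} (hN : 0 < N) (hr : N • u - r ^ 2 • u ∈ P)
    (hA : A ∈ P) : L (r ^ 2 • A) ≤ N * L A := by
  have pow_smul_mem (j : ℕ) {B : E} (hB : B ∈ P) : (r ^ 2) ^ j • B ∈ P := by
    rw [← pow_mul, mul_comm, pow_mul]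
    exact hsq _ B hB
  have apply_pow_smul_u_le (j : ℕ) : L ((r ^ 2) ^ j • u) ≤ L u * N ^ j := by
    induction j with
    | zero => simp
    | succ j ih =>
      have h := hL _ (pow_smul_mem j hr)
      rw [smul_sub, smul_comm, smul_smul, ← pow_succ, map_sub, map_smul, smul_eq_mul,
        sub_nonneg] at h
      calc L ((r ^ 2) ^ (j + 1) • u) ≤ N * L ((r ^ 2) ^ j • u) := h
        _ ≤ N * (L u * N ^ j) := by gcongr
        _ = L u * N ^ (j + 1) := by ring
  obtain ⟨c, hc, hcA⟩ := hu.exists_pos A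
  have growth (j : ℕ) : L ((r ^ 2) ^ j • A) ≤ c * L u * N ^ j := by
    have h := hL _ (pow_smul_mem j hcA)
    rw [smul_sub, smul_comm, map_sub, map_smul, smul_eq_mul, sub_nonneg] at h
    calc L ((r ^ 2) ^ j • A) ≤ c * L ((r ^ 2) ^ j • u) := h
      _ ≤ c * (L u * N ^ j) := by gcongr; exact apply_pow_smul_u_le j
      _ = c * L u * N ^ j := by ring
  have log_convex (j : ℕ) : L ((r ^ 2) ^ (j + 1) • A) ^ 2 ≤
      L ((r ^ 2) ^ j • A) * L ((r ^ 2) ^ (j + 2) • A) := by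
    have h := sq_apply_smul_le_mul (fun s : R ↦ hL _ (hsq s _ (pow_smul_mem j hA))) (r ^ 2)
    rwa [smul_smul, smul_smul, ← pow_succ', ← pow_add, add_comm 2 j] at h
  simpa using apply_one_le_mul_apply_zero_of_sq_le_mul hN (fun j ↦ hL _ (pow_smul_mem j hA))
    log_convex growth

theorem apply_sq_smul_eq_mul (hsq : ∀ (r : R), ∀ B ∈ P, r ^ 2 • B ∈ P) (hu : IsOrderUnit P u)
    (hL : L ∈ (stateSpace P u).extremePoints ℝ) (r : R) (A : E) :
    L (r ^ 2 • A) = L (r ^ 2 • u) * L A := by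
  obtain ⟨N, hN, hr⟩ := hu.exists_pos (r ^ 2 • u)
  have hL_nonneg := hL.1.1
  let L₁ : Module.Dual ℝ E := N⁻¹ • L ∘ₗ Algebra.lsmul ℝ ℝ E (r ^ 2)
  have L₁_nonneg : ∀ B ∈ P, 0 ≤ L₁ B := fun B hB ↦
    mul_nonneg (inv_nonneg.2 hN.le) (hL_nonneg _ (hsq r B hB))
  have L₁_le : ∀ B ∈ P, L₁ B ≤ L B := fun B hB ↦
    (inv_mul_le_iff₀ hN).2 (apply_sq_smul_le_mul hsq hu hL_nonneg hN hr hB)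
  have h : N⁻¹ * L (r ^ 2 • A) = N⁻¹ * L (r ^ 2 • u) * L A :=
    LinearMap.congr_fun (eq_smul_of_mem_extremePoints_stateSpace hu hL L₁_nonneg L₁_le) A
  rw [mul_assoc] at h
  exact mul_left_cancel₀ (inv_ne_zero hN.ne') h

theorem apply_smul_eq_mul (hsq : ∀ (r : R), ∀ B ∈ P, r ^ 2 • B ∈ P) (hu : IsOrderUnit P u)
    (hL : L ∈ (stateSpace P u).extremePoints ℝ) (r : R) (A : E) :
    L (r • A) = L (r • u) * L A := by
  have polarize (B : E) : 4 * L (r • B) = L ((r + 1) ^ 2 • B) - L ((r - 1) ^ 2 • B) := by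
    have : (4 : ℝ) • (r • B) = (r + 1) ^ 2 • B - (r - 1) ^ 2 • B := by
      rw [← algebraMap_smul R (4 : ℝ), map_ofNat]
      module
    rw [← map_sub, ← this, L.map_smul, smul_eq_mul]
  have h := polarize A
  rw [apply_sq_smul_eq_mul hsq hu hL _ A, apply_sq_smul_eq_mul hsq hu hL _ A, ← sub_mul,
    ← polarize] at h
  linarith

theorem exists_algHom_apply_smul_eq_mul (hsq : ∀ (r : R), ∀ B ∈ P, r ^ 2 • B ∈ P)
    (hu : IsOrderUnit P u) (hL : L ∈ (stateSpace P u).extremePoints ℝ) :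
    ∃ φ : R →ₐ[ℝ] ℝ, ∀ (r : R) (A : E), L (r • A) = φ r * L A := by
  refine ⟨AlgHom.ofLinearMap (L ∘ₗ (LinearMap.toSpanSingleton R E u).restrictScalars ℝ) ?_ ?_,
    apply_smul_eq_mul hsq hu hL⟩
  · simpa using hL.1.2
  · intro r s
    simpa [mul_smul] using apply_smul_eq_mul hsq hu hL r (s • u)

end Multiplicativity

section DirectedUnion

variable {E ι V : Type*} [AddCommGroup E] [Module ℝ E] [Nonempty ι] {P : ι → PointedCone ℝ E}
  {u : E}

theorem abs_mul_smul_add_smul_mem {P : PointedCone ℝ E} {A : E} {c : ℝ} (hsub : c • u - A ∈ P)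
    (hadd : c • u + A ∈ P) (t : ℝ) : (|t| * c) • u + t • A ∈ P := by
  rcases le_total 0 t with ht | ht
  · convert P.smul_mem ht hadd using 1
    rw [abs_of_nonneg ht]
    module
  · convert P.smul_mem (neg_nonneg.2 ht) hsub using 1
    rw [abs_of_nonpos ht]
    module

theorem exists_subset_of_finite_of_subset_iSup (hP : Directed (· ≤ ·) P) {s : Set E}
    (hs : s.Finite) (h : s ⊆ (⨆ i, P i : PointedCone ℝ E)) : ∃ i, s ⊆ P i := by
  lift s to Finset E using hs
  rw [Submodule.coe_iSup_of_directed P hP] at h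
  exact hP.exists_mem_subset_of_finset_subset_biUnion h

theorem exists_eventually_smul_orderUnit_add_mem [NormedAddCommGroup V] [NormedSpace ℝ V]
    [FiniteDimensional ℝ V] (hP : Directed (· ≤ ·) P) (hu : IsOrderUnit (⨆ i, P i) u)
    (T : V →ₗ[ℝ] E) {δ : ℝ} (hδ : 0 < δ) : ∃ i, ∀ᶠ v in 𝓝 0, δ • u + T v ∈ P i := by
  let b := Module.finBasis ℝ V
  choose c hsub hadd using fun j ↦ hu.exists_sub_mem_and_add_mem (T (b j))
  obtain ⟨i, hi⟩ := exists_subset_of_finite_of_subset_iSup hP (s := {u} ∪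
      (Set.range (fun j ↦ c j • u - T (b j)) ∪ Set.range fun j ↦ c j • u + T (b j)))
    (by toFinite_tac) (by
      simp only [Set.union_subset_iff, Set.singleton_subset_iff, Set.range_subset_iff]
      exact ⟨hu.mem, hsub, hadd⟩)
  simp only [Set.union_subset_iff, Set.singleton_subset_iff, Set.range_subset_iff] at hi
  obtain ⟨u_mem, sub_mem, add_mem⟩ := hi
  have eventually_le : ∀ᶠ v in 𝓝 0, ∑ j, |b.coord j v| * c j ≤ δ := by
    have : Continuous fun v ↦ ∑ j, |b.coord j v| * c j :=
      continuous_finsetSum _ fun j _ ↦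
        (LinearMap.continuous_of_finiteDimensional (b.coord j)).abs.mul continuous_const
    refine (this.tendsto' 0 0 (by simp)).eventually_le_const hδ
  refine ⟨i, eventually_le.mono fun v hv ↦ ?_⟩
  have decomposition : δ • u + T v = (δ - ∑ j, |b.coord j v| * c j) • u +
      ∑ j, ((|b.coord j v| * c j) • u + b.coord j v • T (b j)) := by
    have : T v = ∑ j, b.coord j v • T (b j) := by
      conv_lhs => rw [← b.sum_repr v, map_sum]
      simp
    rw [Finset.sum_add_distrib, ← Finset.sum_smul, this]
    module
  rw [decomposition]
  exact (P i).add_mem ((P i).smul_mem (sub_nonneg.2 hv) u_mem)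
    ((P i).sum_mem fun j _ ↦ abs_mul_smul_add_smul_mem (sub_mem j) (add_mem j) _)

theorem exists_forall_mem_of_isBounded [NormedAddCommGroup V] [NormedSpace ℝ V]
    [FiniteDimensional ℝ V] (hP : Directed (· ≤ ·) P) (hu : IsOrderUnit (⨆ i, P i) u)
    (T : V →ₗ[ℝ] E) {δ : ℝ} (hδ : 0 < δ) {K : Set V} (hK : Bornology.IsBounded K)
    (hT : ∀ v ∈ K, T v - δ • u ∈ ⨆ i, P i) : ∃ i, ∀ v ∈ K, T v ∈ P i := by
  obtain ⟨i₁, near_zero⟩ := exists_eventually_smul_orderUnit_add_mem hP hu T hδ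
  obtain ⟨ε, hε, near_zero⟩ := Metric.eventually_nhds_iff.1 near_zero
  have : ProperSpace V := FiniteDimensional.proper_real V
  have totallyBounded : TotallyBounded K :=
    hK.isCompact_closure.totallyBounded.subset subset_closure
  obtain ⟨t, htK, ht, hcover⟩ :=
    totallyBounded_iff_subset.1 totallyBounded _ (Metric.dist_mem_uniformity hε)
  obtain ⟨i₂, centres⟩ := exists_subset_of_finite_of_subset_iSup hP
    (ht.image fun v ↦ T v - δ • u) (Set.image_subset_iff.2 fun v hv ↦ hT v (htK hv))
  obtain ⟨i, hi₁, hi₂⟩ := hP i₁ i₂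
  refine ⟨i, fun v hv ↦ ?_⟩
  obtain ⟨v₀, hv₀, hdist⟩ := Set.mem_iUnion₂.1 (hcover hv)
  have centre_mem : T v₀ - δ • u ∈ P i := hi₂ (centres (Set.mem_image_of_mem _ hv₀))
  have rest_mem : δ • u + T (v - v₀) ∈ P i :=
    hi₁ (near_zero (by rwa [dist_zero_right, ← dist_eq_norm]))
  have sum_eq : T v = (T v₀ - δ • u) + (δ • u + T (v - v₀)) := by
    rw [map_sub]
    abel
  rw [sum_eq]
  exact (P i).add_mem centre_mem rest_mem

theorem exists_forall_mem_of_seminorm_le [AddCommGroup V] [Module ℝ V] [FiniteDimensional ℝ V]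
    (hP : Directed (· ≤ ·) P) (hu : IsOrderUnit (⨆ i, P i) u) (T : V →ₗ[ℝ] E) {δ : ℝ} (hδ : 0 < δ)
    (p : Seminorm ℝ V) (hp : ∀ v, p v = 0 → v = 0) (C : ℝ) :
    ∃ i, ∀ v, p v ≤ C → T v - δ • u ∈ ⨆ i, P i → T v ∈ P i := by
  let : Norm V := ⟨p⟩
  have core : NormedSpace.Core ℝ V :=
    { norm_nonneg := apply_nonneg p
      norm_smul := map_smul_eq_mul p
      norm_triangle := map_add_le_add p
      norm_eq_zero_iff := fun v ↦ ⟨hp v, fun h ↦ h ▸ map_zero p⟩ }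
  let : NormedAddCommGroup V := .ofCore core
  let : NormedSpace ℝ V := .ofCore core
  have bounded : Bornology.IsBounded {v : V | p v ≤ C ∧ T v - δ • u ∈ ⨆ i, P i} :=
    isBounded_iff_forall_norm_le.2 ⟨C, fun v hv ↦ hv.1⟩
  obtain ⟨i, hi⟩ := exists_forall_mem_of_isBounded hP hu T hδ bounded fun v hv ↦ hv.2
  exact ⟨i, fun v hv hvP ↦ hi v ⟨hv, hvP⟩⟩

end DirectedUnion

section Matrix

open scoped MatrixOrder

theorem exists_eq_transpose_mul_self_of_posSemidef {ι : Type*} [Fintype ι] {A : Matrix ι ι ℝ}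
    (hA : A.PosSemidef) : ∃ B : Matrix ι ι ℝ, A = Bᵀ * B := by
  classical
  simpa [star_eq_conjTranspose] using CStarAlgebra.nonneg_iff_eq_star_mul_self.1 hA.nonneg

theorem exists_posSemidef_sub_smul_one_of_posDef {ι : Type*} [Finite ι] [DecidableEq ι]
    {A : Matrix ι ι ℝ} (hA : A.PosDef) : ∃ δ : ℝ, 0 < δ ∧ (A - δ • 1).PosSemidef := by
  have := Fintype.ofFinite ι
  rcases subsingleton_or_nontrivial (Matrix ι ι ℝ) with h | h
  · exact ⟨1, one_pos, by rw [Subsingleton.elim (A - _) 0]; exact .zero⟩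
  · obtain ⟨δ, hδ, hle⟩ := (CFC.exists_pos_algebraMap_le_iff hA.isHermitian).2
      fun x hx ↦ hA.isStrictlyPositive.spectrum_pos hx
    exact ⟨δ, hδ, by simpa [Matrix.le_iff, Algebra.algebraMap_eq_smul_one] using hle⟩

theorem posDef_sub_smul_one_of_lt {ι : Type*} [Fintype ι] [DecidableEq ι] {A : Matrix ι ι ℝ}
    (hA : A.IsSymm) {c δ : ℝ} (h : ∀ v, c * (v ⬝ᵥ v) ≤ v ⬝ᵥ A *ᵥ v) (hδ : δ < c) :
    (A - δ • 1).PosDef := by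
  have hermitian : (A - δ • 1).IsHermitian := by
    simp [IsHermitian, conjTranspose_eq_transpose_of_trivial, hA.eq]
  refine .of_dotProduct_mulVec_pos hermitian fun v hv ↦ ?_
  have hvv : 0 < v ⬝ᵥ v := by simpa using dotProduct_star_self_pos_iff.2 hv
  have := mul_lt_mul_of_pos_right hδ hvv
  simpa [sub_mulVec, smul_mulVec, dotProduct_sub] using this.trans_le (h v)

theorem apply_eq_apply_map_algebraMap {S R ι κ : Type*} [CommSemiring S] [Semiring R]
    [Algebra S R] [Finite ι] [Finite κ] {L : Module.Dual S (Matrix ι κ R)} {φ : R →ₐ[S] S}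
    (h : ∀ r A, L (r • A) = φ r * L A) (A : Matrix ι κ R) :
    L A = L (A.map fun r ↦ algebraMap S R (φ r)) := by
  classical
  have := Fintype.ofFinite ι
  have := Fintype.ofFinite κ
  have apply_single (a b) (r : R) : L (single a b r) = φ r * L (single a b 1) := by
    rw [← h, smul_single, smul_eq_mul, mul_one]
  rw [matrix_eq_sum_single (A.map _)]
  conv_lhs => rw [matrix_eq_sum_single A]
  simp only [map_sum, map_apply]
  refine Finset.sum_congr rfl fun a _ ↦ Finset.sum_congr rfl fun b _ ↦ ?_
  rw [apply_single a b (A a b), apply_single a b (algebraMap S R _), AlgHom.commutes]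
  rfl

end Matrix

/-- The `k × k` matrix polynomials in `n` variables. -/
abbrev MatPoly (n k : ℕ) : Type :=
  Matrix (Fin k) (Fin k) (MvPolynomial (Fin n) ℝ)

/-- The generators `gᵢ PᵀP` of the `e`-truncated matricial quadratic module, where `i = 0` stands
for `g₀ = 1`. -/
def truncGenerators {n m : ℕ} (g : Fin m → MvPolynomial (Fin n) ℝ) (k e : ℕ) : Set (MatPoly n k) :=
  {H | ∃ (i : Fin (m + 1)) (P : MatPoly n k),
    (∀ a b, DegOK e (withOne g i) (P a b)) ∧ H = withOne g i • (Pᵀ * P)}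

section Truncation

variable {n m k e e' : ℕ} {g : Fin m → MvPolynomial (Fin n) ℝ} {H : MatPoly n k}

theorem DegOK.mono {p q : MvPolynomial (Fin n) ℝ} (h : DegOK e q p) (he : e ≤ e') :
    DegOK e' q p :=
  h.imp_right fun ⟨hq, hdeg⟩ ↦ ⟨hq, hdeg.trans he⟩

theorem DegOK.mul_left {p q : MvPolynomial (Fin n) ℝ} (h : DegOK e q p)
    (r : MvPolynomial (Fin n) ℝ) : DegOK (e + 2 * r.totalDegree) q (r * p) := by
  rcases h with rfl | ⟨hq, hdeg⟩
  · exact .inl (mul_zero r)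
  · have := totalDegree_mul r p
    exact .inr ⟨hq, by omega⟩

theorem exists_forall_degOK {q : MvPolynomial (Fin n) ℝ} (hq : q ≠ 0) (P : MatPoly n k) :
    ∃ e, ∀ a b, DegOK e q (P a b) := by
  refine ⟨2 * (∑ a, ∑ b, (P a b).totalDegree) + q.totalDegree, fun a b ↦ .inr ⟨hq, ?_⟩⟩
  gcongr
  calc (P a b).totalDegree ≤ ∑ b, (P a b).totalDegree :=
        Finset.single_le_sum (f := fun b ↦ (P a b).totalDegree) (by simp) (Finset.mem_univ b)
    _ ≤ ∑ a, ∑ b, (P a b).totalDegree :=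
        Finset.single_le_sum (f := fun a ↦ ∑ b, (P a b).totalDegree) (by simp) (Finset.mem_univ a)

theorem truncGenerators_subset_matTruncQM : truncGenerators g k e ⊆ MatTruncQM e g k := by
  rintro _ ⟨i, P, hP, rfl⟩
  refine ⟨1, fun i' _ ↦ if i' = i then P else 0, fun i' _ a b ↦ ?_, ?_⟩
  · dsimp only
    split_ifs with h
    · exact h ▸ hP a b
    · exact .inl rfl
  · simp [apply_ite transpose]

theorem add_mem_matTruncQM {H' : MatPoly n k} (hH : H ∈ MatTruncQM e g k)
    (hH' : H' ∈ MatTruncQM e g k) : H + H' ∈ MatTruncQM e g k := by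
  obtain ⟨N, P, hP, rfl⟩ := hH
  obtain ⟨N', P', hP', rfl⟩ := hH'
  refine ⟨N + N', fun i ↦ Fin.append (P i) (P' i), fun i j a b ↦ ?_, ?_⟩
  · induction j using Fin.addCases with
    | left j => simpa using hP i j a b
    | right j => simpa using hP' i j a b
  · simp [Fin.sum_univ_add, Finset.sum_add_distrib]

theorem matTruncQM_eq_closure :
    MatTruncQM e g k = AddSubmonoid.closure (truncGenerators g k e) := by
  ext H
  constructor
  · rintro ⟨N, P, hP, rfl⟩
    exact sum_mem fun i _ ↦ sum_mem fun j _ ↦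
      AddSubmonoid.subset_closure ⟨i, P i j, hP i j, rfl⟩
  · intro hH
    induction hH using AddSubmonoid.closure_induction with
    | mem H hH => exact truncGenerators_subset_matTruncQM hH
    | zero => exact ⟨0, fun _ ↦ Fin.elim0, fun _ j ↦ j.elim0, by simp⟩
    | add H H' _ _ hH hH' => exact add_mem_matTruncQM hH hH'

theorem truncGenerators_mono (he : e ≤ e') : truncGenerators g k e ⊆ truncGenerators g k e' :=
  fun _ ⟨i, P, hP, h⟩ ↦ ⟨i, P, fun a b ↦ (hP a b).mono he, h⟩

theorem isSymm_of_mem_matTruncQM (hH : H ∈ MatTruncQM e g k) : H.IsSymm := by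
  obtain ⟨N, P, -, rfl⟩ := hH
  simp [IsSymm, transpose_sum]

theorem sq_smul_mem_matTruncQM (r : MvPolynomial (Fin n) ℝ) (hH : H ∈ MatTruncQM e g k) :
    r ^ 2 • H ∈ MatTruncQM (e + 2 * r.totalDegree) g k := by
  obtain ⟨N, P, hP, rfl⟩ := hH
  refine ⟨N, fun i j ↦ r • P i j, fun i j a b ↦ (hP i j a b).mul_left r, ?_⟩
  simp only [Finset.smul_sum, transpose_smul, smul_mul_smul_comm, ← sq, smul_comm (r ^ 2)]

theorem smul_mem_matTruncQM {c : ℝ} (hc : 0 ≤ c) (hH : H ∈ MatTruncQM e g k) :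
    c • H ∈ MatTruncQM e g k := by
  have h := sq_smul_mem_matTruncQM (C √c) hH
  rwa [totalDegree_C, mul_zero, add_zero, ← C_pow, Real.sq_sqrt hc, ← algebraMap_eq,
    algebraMap_smul] at h

end Truncation

/-- `MatTruncQM e g k` as a convex cone. -/
def matTruncCone {n m : ℕ} (g : Fin m → MvPolynomial (Fin n) ℝ) (k e : ℕ) :
    PointedCone ℝ (MatPoly n k) where
  carrier := MatTruncQM e g k
  zero_mem' := by rw [matTruncQM_eq_closure]; exact zero_mem _
  add_mem' := add_mem_matTruncQM
  smul_mem' c _ := smul_mem_matTruncQM c.2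

/-- The matrix polynomials whose symmetrization `A + Aᵀ` lies in `MatTruncQM e g k`. All
skew-symmetric matrices are included so that `1` can be an order unit of the space of all matrix
polynomials, which, unlike the space of symmetric ones, is spanned by the matrix units. -/
def truncCone {n m : ℕ} (g : Fin m → MvPolynomial (Fin n) ℝ) (k e : ℕ) :
    PointedCone ℝ (MatPoly n k) :=
  (matTruncCone g k e).comap (LinearMap.id + (transposeLinearEquiv _ _ ℝ _).toLinearMap)

/-- The matrix polynomials whose symmetrization lies in the matricial quadratic module of `g`. -/
def quadCone {n m : ℕ} (g : Fin m → MvPolynomial (Fin n) ℝ) (k : ℕ) : PointedCone ℝ (MatPoly n k) :=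
  ⨆ e, truncCone g k e

section QuadraticModule

variable {n m k e : ℕ} {g : Fin m → MvPolynomial (Fin n) ℝ} {A : MatPoly n k}

theorem mem_truncCone_iff : A ∈ truncCone g k e ↔ A + Aᵀ ∈ MatTruncQM e g k :=
  Iff.rfl

theorem mem_matTruncQM_of_mem_truncCone (hA : A.IsSymm) (h : A ∈ truncCone g k e) :
    A ∈ MatTruncQM e g k := by
  rw [mem_truncCone_iff, hA.eq, ← two_smul ℝ A] at h
  exact ((matTruncCone g k e).smul_mem_iff two_pos).1 h

theorem mem_truncCone_of_mem_matTruncQM (h : A ∈ MatTruncQM e g k) : A ∈ truncCone g k e := by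
  rw [mem_truncCone_iff, (isSymm_of_mem_matTruncQM h).eq]
  exact add_mem_matTruncQM h h

theorem truncCone_mono : Monotone (truncCone g k) := fun e e' he A hA ↦ by
  rw [mem_truncCone_iff, matTruncQM_eq_closure] at hA ⊢
  exact AddSubmonoid.closure_mono (truncGenerators_mono he) hA

theorem mem_quadCone_iff : A ∈ quadCone g k ↔ ∃ e, A ∈ truncCone g k e :=
  Submodule.mem_iSup_of_directed _ truncCone_mono.directed_le

theorem sq_smul_mem_quadCone (r : MvPolynomial (Fin n) ℝ) (hA : A ∈ quadCone g k) :
    r ^ 2 • A ∈ quadCone g k := by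
  obtain ⟨e, he⟩ := mem_quadCone_iff.1 hA
  refine mem_quadCone_iff.2 ⟨e + 2 * r.totalDegree, ?_⟩
  rw [mem_truncCone_iff, transpose_smul, ← smul_add]
  exact sq_smul_mem_matTruncQM r he

theorem mem_quadCone_of_transpose_eq_neg (hA : Aᵀ = -A) : A ∈ quadCone g k := by
  refine mem_quadCone_iff.2 ⟨0, ?_⟩
  rw [mem_truncCone_iff, hA, add_neg_cancel]
  exact (matTruncCone g k 0).zero_mem

theorem withOne_smul_transpose_mul_self_mem_quadCone (i : Fin (m + 1)) (P : MatPoly n k) :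
    withOne g i • (Pᵀ * P) ∈ quadCone g k := by
  by_cases hg : withOne g i = 0
  · rw [hg, zero_smul]
    exact zero_mem _
  · obtain ⟨e, hP⟩ := exists_forall_degOK hg P
    exact mem_quadCone_iff.2 ⟨e, mem_truncCone_of_mem_matTruncQM
      (truncGenerators_subset_matTruncQM ⟨i, P, hP, rfl⟩)⟩

theorem transpose_mul_self_mem_quadCone (P : MatPoly n k) : Pᵀ * P ∈ quadCone g k := by
  simpa [withOne] using withOne_smul_transpose_mul_self_mem_quadCone (g := g) 0 P

theorem smul_transpose_mul_self_mem_quadCone {s : MvPolynomial (Fin n) ℝ} (hs : s ∈ QM g)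
    (P : MatPoly n k) : s • (Pᵀ * P) ∈ quadCone g k := by
  obtain ⟨t, ht, rfl⟩ := hs
  rw [Finset.sum_smul]
  refine sum_mem fun i _ ↦ ?_
  obtain ⟨l, q, hq⟩ := ht i
  rw [hq, Finset.sum_mul, Finset.sum_smul]
  refine sum_mem fun j _ ↦ ?_
  rw [mul_smul]
  exact sq_smul_mem_quadCone _ (withOne_smul_transpose_mul_self_mem_quadCone i P)

theorem exists_smul_one_sub_transpose_mul_self_mem (harch : IsArchimedeanQM (QM g))
    (P : MatPoly n k) : ∃ c : ℝ, c • 1 - Pᵀ * P ∈ quadCone g k := by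
  induction P using Matrix.induction_on' with
  | h_zero => exact ⟨0, by simp⟩
  | h_add P Q hP hQ =>
    obtain ⟨c₁, hc₁⟩ := hP
    obtain ⟨c₂, hc₂⟩ := hQ
    refine ⟨2 * c₁ + 2 * c₂, ?_⟩
    -- the parallelogram identity
    have eq : (2 * c₁ + 2 * c₂) • 1 - (P + Q)ᵀ * (P + Q) =
        (2 : ℝ) • (c₁ • 1 - Pᵀ * P) + (2 : ℝ) • (c₂ • 1 - Qᵀ * Q) + (P - Q)ᵀ * (P - Q) := by
      simp only [transpose_add, transpose_sub, add_mul, mul_add, sub_mul, mul_sub]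
      module
    rw [eq]
    exact add_mem (add_mem (PointedCone.smul_mem _ zero_le_two hc₁)
      (PointedCone.smul_mem _ zero_le_two hc₂)) (transpose_mul_self_mem_quadCone _)
  | h_std_basis a b f =>
    obtain ⟨N, hN⟩ := harch (f ^ 2)
    refine ⟨N, ?_⟩
    -- the diagonal matrix unit `S` and `1 - S` are symmetric idempotents, hence squares
    let S : MatPoly n k := single b b 1
    have hS : Sᵀ * S = S := by simp [S]
    have hS' : (1 - S)ᵀ * (1 - S) = 1 - S := by
      have : S * S = S := by simp [S]
      simp [S, sub_mul, mul_sub]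
    have eq : (N : ℝ) • (1 : MatPoly n k) - (single a b f)ᵀ * single a b f =
        ((N : MvPolynomial (Fin n) ℝ) - f ^ 2) • S + (N : ℝ) • (1 - S) := by
      have : (single a b f)ᵀ * single a b f = f ^ 2 • S := by simp [S, sq]
      simp only [this, sub_smul, smul_sub, Nat.cast_smul_eq_nsmul]
      abel
    rw [eq]
    refine add_mem ?_ (PointedCone.smul_mem _ N.cast_nonneg ?_)
    · exact hS ▸ smul_transpose_mul_self_mem_quadCone hN S
    · exact hS' ▸ transpose_mul_self_mem_quadCone (1 - S)

theorem isOrderUnit_one_quadCone (harch : IsArchimedeanQM (QM g)) :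
    IsOrderUnit (quadCone g k) 1 where
  mem := by simpa using transpose_mul_self_mem_quadCone (g := g) (1 : MatPoly n k)
  exists_smul_sub_mem A := by
    obtain ⟨c, hc⟩ := exists_smul_one_sub_transpose_mul_self_mem harch A
    refine ⟨2⁻¹ * (c + 1), ?_⟩
    have eq : (2⁻¹ * (c + 1)) • 1 - A =
        (2⁻¹ : ℝ) • ((c • 1 - Aᵀ * A) + (A - 1)ᵀ * (A - 1) + (Aᵀ - A)) := by
      simp only [transpose_sub, transpose_one, sub_mul, mul_sub, one_mul, mul_one]
      module
    rw [eq]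
    exact PointedCone.smul_mem _ (by norm_num) (add_mem (add_mem hc
      (transpose_mul_self_mem_quadCone _)) (mem_quadCone_of_transpose_eq_neg (by simp)))

theorem map_C_mem_quadCone {B : Matrix (Fin k) (Fin k) ℝ} (hB : B.PosSemidef) :
    B.map C ∈ quadCone g k := by
  obtain ⟨D, rfl⟩ := exists_eq_transpose_mul_self_of_posSemidef hB
  simpa [Matrix.map_mul, transpose_map] using transpose_mul_self_mem_quadCone (g := g) (D.map C)

theorem map_eval_sub_smul_one (x : Fin n → ℝ) (A : MatPoly n k) (c : ℝ) :
    (A - c • 1).map (eval x) = A.map (eval x) - c • 1 := by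
  ext1 a b
  by_cases hab : a = b <;> simp [hab, one_apply, smul_eq_C_mul]

theorem exists_mem_solSet_apply_eq_apply_map_eval (harch : IsArchimedeanQM (QM g))
    {L : Module.Dual ℝ (MatPoly n k)} (hL : L ∈ (stateSpace (quadCone g k) 1).extremePoints ℝ) :
    ∃ x ∈ SolSet g, ∀ A, L A = L (A.map fun p ↦ C (eval x p)) := by
  obtain ⟨φ, hφ⟩ := exists_algHom_apply_smul_eq_mul (fun r _ ↦ sq_smul_mem_quadCone r)
    (isOrderUnit_one_quadCone harch) hL
  let x : Fin n → ℝ := fun i ↦ φ (X i)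
  have φ_eq (p) : φ p = eval x p := by
    have : φ = aeval x := algHom_ext fun i ↦ by simp [x]
    rw [this, aeval_eq_eval]
  refine ⟨x, fun i ↦ ?_, fun A ↦ ?_⟩
  · have h := hL.1.1 _ (withOne_smul_transpose_mul_self_mem_quadCone i.succ 1)
    simpa [hφ, hL.1.2, φ_eq, withOne] using h
  · simpa only [φ_eq, algebraMap_eq] using apply_eq_apply_map_algebraMap hφ A

/-- The Scherer–Hol matrix version of Putinar's Positivstellensatz. -/
theorem mem_quadCone_of_posDef (harch : IsArchimedeanQM (QM g))
    (hA : ∀ x ∈ SolSet g, (A.map (eval x)).PosDef) : A ∈ quadCone g k := by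
  by_contra hmem
  obtain ⟨L, hL, hLA⟩ := exists_mem_extremePoints_stateSpace_apply_nonpos
    (isOrderUnit_one_quadCone harch) hmem
  obtain ⟨x, hx, apply_eq⟩ := exists_mem_solSet_apply_eq_apply_map_eval harch hL
  obtain ⟨δ, hδ, hpsd⟩ := exists_posSemidef_sub_smul_one_of_posDef (hA x hx)
  have h : 0 ≤ L A - δ := by
    have map_eq : ((A.map (eval x) - δ • 1).map C : MatPoly n k) =
        (A.map fun p ↦ C (eval x p)) - δ • 1 := by
      ext1 a b
      by_cases hab : a = b <;> simp [hab, one_apply, smul_eq_C_mul]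
    have := hL.1.1 _ (map_C_mem_quadCone hpsd)
    rwa [map_eq, map_sub, ← apply_eq, map_smul, hL.1.2, smul_eq_mul, mul_one] at this
  linarith

end QuadraticModule

theorem stmt_2 (C d k m n : ℕ) (hC : 0 < C) (hd : 0 < d) (hk : 0 < k) (hm : 0 < m)
    (hn : 0 < n)
    (ν : Seminorm ℝ (Matrix (Fin k) (Fin k) (MvPolynomial (Fin n) ℝ)))
    (hν : ∀ H : Matrix (Fin k) (Fin k) (MvPolynomial (Fin n) ℝ),
      (∀ a b, (H a b).totalDegree ≤ d) → ν H = 0 → H = 0)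
    (g : Fin m → MvPolynomial (Fin n) ℝ) (harch : IsArchimedeanQM (QM g)) :
    ∃ e : ℕ, ∀ H : Matrix (Fin k) (Fin k) (MvPolynomial (Fin n) ℝ),
      H.IsSymm → (∀ a b, (H a b).totalDegree ≤ d) → ν H ≤ (C : ℝ) →
      (∀ x ∈ SolSet g, ∀ v : Fin k → ℝ,
        (1 / (C : ℝ)) * (v ⬝ᵥ v) ≤ v ⬝ᵥ (H.map (eval x)) *ᵥ v) →
      H ∈ MatTruncQM e g k := by
  let T := (restrictTotalDegree (Fin n) ℝ d).subtype.mapMatrix (m := Fin k) (n := Fin k)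
  have hC' : (0 : ℝ) < C := Nat.cast_pos.2 hC
  have hδ : (0 : ℝ) < 1 / (2 * C) := by positivity
  have definite (V) (hV : ν (T V) = 0) : V = 0 :=
    map_injective Subtype.val_injective <|
      hν (T V) (fun a b ↦ (mem_restrictTotalDegree _ _ _).1 (V a b).2) hV
  obtain ⟨e, he⟩ := exists_forall_mem_of_seminorm_le truncCone_mono.directed_le
    (isOrderUnit_one_quadCone harch) T hδ (ν.comp T) definite C
  refine ⟨e, fun H hsymm hdeg hnorm hpos ↦ mem_matTruncQM_of_mem_truncCone hsymm ?_⟩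
  refine he (.of fun a b ↦ ⟨H a b, (mem_restrictTotalDegree _ _ _).2 (hdeg a b)⟩) hnorm ?_
  refine mem_quadCone_of_posDef harch fun x hx ↦ ?_
  change ((H - (1 / (2 * C) : ℝ) • 1).map (eval x)).PosDef
  rw [map_eval_sub_smul_one]
  exact posDef_sub_smul_one_of_lt (hsymm.map _) (hpos x hx) (by gcongr; linarith)
end
end

section
/- Let n = 2, write X, Y for the two variables, and let g := (g_1, g_2) with g_1 := −(1 − X² − Y²)(4 − (X − 4)² − Y²) and g_2 := 1 − Y. Then: the quadratic module M(g) is Archimedean; g_1 is strictly quasiconcave on S(g) ∩ Z(g_1); and for every d ∈ ℕ₀, the degree-d Lasserre relaxation S_d(g) strictly contains the closure of the convex hull of S(g). -/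
open MvPolynomial Matrix

noncomputable section

/-- The `d`-truncated quadratic module `M_d(g)`. -/
def TruncQM {n : ℕ} (d : ℕ) {m : ℕ} (g : Fin m → MvPolynomial (Fin n) ℝ) :
    Set (MvPolynomial (Fin n) ℝ) :=
  {f | ∃ (N : ℕ) (p : Fin (m + 1) → Fin N → MvPolynomial (Fin n) ℝ),
    (∀ i j, DegOK d (withOne g i) (p i j)) ∧
    f = ∑ i, ∑ j, p i j ^ 2 * withOne g i}

/-- The degree `d` Lasserre relaxation `S_d(g)`: all `x ∈ ℝⁿ` admitting a linear functional
`L` on `ℝ[X]_d` with `L(1) = 1`, `L(X_i) = x_i` and `L ≥ 0` on `M_d(g)`. -/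
def Lasserre {n : ℕ} (d : ℕ) {m : ℕ} (g : Fin m → MvPolynomial (Fin n) ℝ) :
    Set (Fin n → ℝ) :=
  {x | ∃ L : MvPolynomial.restrictTotalDegree (Fin n) ℝ d →ₗ[ℝ] ℝ,
    (∀ p : MvPolynomial.restrictTotalDegree (Fin n) ℝ d,
      (p : MvPolynomial (Fin n) ℝ) = 1 → L p = 1) ∧
    (∀ i : Fin n, ∀ p : MvPolynomial.restrictTotalDegree (Fin n) ℝ d,
      (p : MvPolynomial (Fin n) ℝ) = X i → L p = x i) ∧
    (∀ p : MvPolynomial.restrictTotalDegree (Fin n) ℝ d,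
      (p : MvPolynomial (Fin n) ℝ) ∈ TruncQM d g → 0 ≤ L p)}


/-- The real zero set `Z(p)` of a polynomial `p`. -/
def ZSet {n : ℕ} (p : MvPolynomial (Fin n) ℝ) : Set (Fin n → ℝ) :=
  {x | eval x p = 0}

/-- The gradient `∇g(x)` of a polynomial `g` at a point `x`. -/
def gradEval {n : ℕ} (g : MvPolynomial (Fin n) ℝ) (x : Fin n → ℝ) : Fin n → ℝ :=
  fun i => eval x (pderiv i g)

/-- The Hessian `(Hess g)(x)` of a polynomial `g` at a point `x`. -/
def hessEval {n : ℕ} (g : MvPolynomial (Fin n) ℝ) (x : Fin n → ℝ) :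
    Matrix (Fin n) (Fin n) ℝ :=
  Matrix.of fun i j => eval x (pderiv i (pderiv j g))

/-- `g` is strictly quasiconcave at `x`. -/
def StrictlyQuasiconcaveAt {n : ℕ} (g : MvPolynomial (Fin n) ℝ) (x : Fin n → ℝ) : Prop :=
  ∀ v : Fin n → ℝ, v ≠ 0 → gradEval g x ⬝ᵥ v = 0 → v ⬝ᵥ (hessEval g x) *ᵥ v < 0

/-!
The elements bounded by a constant modulo a quadratic module form a subalgebra, so `M(g)` is
Archimedean as soon as it contains some `N - ∑ Xᵢ²`; the sets `S(g)` and `conv S(g)` are then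
compact. Both factors of `g₁` are strictly concave, and on the zero set of one of them the other one
has a constant sign, hence `g₁` inherits strict quasiconcavity there.

On the line `y = 1` the second constraint vanishes and `g₁` vanishes to second order at `(0, 1)`.
A unit mass at `(t, 1)` with `t < 0` small violates `g₁ ≥ 0` only by `O(t²)`, which masses of size
`O(t²)` at `d + 1` points of the right disk repair for all polynomials of degree at most `d`, by
Lagrange interpolation. The barycentre lies in `S_d(g)` and still has a negative first coordinate,
so the tangents of the unit circle near `(0, 1)` separate it from `S(g)`.
-/

section BoundedElements

variable {A : Type*} [CommRing A] {M : Submodule (Subsemiring.sumSq A) A}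

lemma isSumSq_mul_mem {s a : A} (hs : IsSumSq s) (ha : a ∈ M) : s * a ∈ M :=
  M.smul_mem ⟨s, Subsemiring.mem_sumSq.2 hs⟩ ha

lemma isSumSq_mem {s : A} (hM : 1 ∈ M) (hs : IsSumSq s) : s ∈ M := by
  simpa only [mul_one] using isSumSq_mul_mem hs hM

lemma sq_mem (hM : 1 ∈ M) (a : A) : a ^ 2 ∈ M :=
  isSumSq_mem hM (IsSquare.sq a).isSumSq

/-- The elements of `A` that are bounded with respect to a quadratic module `M`, that is, a
submodule over the sums of squares which contains `1`. Boundedness of `a` is encoded by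
`N - a ^ 2 ∈ M` rather than by `N ± a ∈ M`, which makes closure under products immediate. -/
def boundedSubalgebra [Algebra ℝ A] (M : Submodule (Subsemiring.sumSq A) A) (hM : 1 ∈ M) :
    Subalgebra ℝ A where
  carrier := {a | ∃ N : ℕ, (N : A) - a ^ 2 ∈ M}
  mul_mem' := by
    rintro a b ⟨N, ha⟩ ⟨K, hb⟩
    refine ⟨K * N, ?_⟩
    have h := M.add_mem (isSumSq_mul_mem (.natCast K) ha)
      (isSumSq_mul_mem (IsSquare.sq a).isSumSq hb)
    convert h using 1
    push_cast
    ring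
  add_mem' := by
    rintro a b ⟨N, ha⟩ ⟨K, hb⟩
    refine ⟨2 * (N + K), ?_⟩
    have h := M.add_mem (M.add_mem (M.add_mem ha ha) (M.add_mem hb hb)) (sq_mem hM (a - b))
    convert h using 1
    push_cast
    ring
  algebraMap_mem' r := by
    obtain ⟨N, hN⟩ := exists_nat_ge (r ^ 2)
    refine ⟨N, ?_⟩
    have h := sq_mem hM (algebraMap ℝ A √(N - r ^ 2))
    rwa [← map_pow, Real.sq_sqrt (sub_nonneg.2 hN), map_sub, map_natCast, map_pow] at h

-- With `b = a / 2`, this is `N + 1 - 2 b = (N - b ^ 2) + (b - 1) ^ 2`.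
lemma exists_natCast_sub_mem_of_mem_boundedSubalgebra [Algebra ℝ A] {hM : 1 ∈ M} {a : A}
    (ha : a ∈ boundedSubalgebra M hM) : ∃ N : ℕ, (N : A) - a ∈ M := by
  obtain ⟨N, hN⟩ := Subalgebra.smul_mem _ ha (1 / 2 : ℝ)
  refine ⟨N + 1, ?_⟩
  have h := M.add_mem hN (sq_mem hM ((1 / 2 : ℝ) • a - 1))
  convert h using 1
  push_cast
  algebra

end BoundedElements

section QuadraticModule

variable {n m : ℕ} {g : Fin m → MvPolynomial (Fin n) ℝ}

lemma isSOS_iff_isSumSq {p : MvPolynomial (Fin n) ℝ} : IsSOS p ↔ IsSumSq p := by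
  constructor
  · rintro ⟨l, q, rfl⟩
    exact IsSumSq.sum_sq _ _
  · intro hp
    induction hp with
    | zero => exact ⟨0, Fin.elim0, by simp⟩
    | sq_add a _ ih =>
      obtain ⟨l, q, rfl⟩ := ih
      exact ⟨l + 1, Fin.cons a q, by simp [Fin.sum_univ_succ, sq]⟩

/-- The quadratic module generated by `g`, as a submodule over the semiring of sums of squares.
Its underlying set is `QM g`, see `mem_quadraticModule`. -/
def quadraticModule (g : Fin m → MvPolynomial (Fin n) ℝ) :
    Submodule (Subsemiring.sumSq (MvPolynomial (Fin n) ℝ)) (MvPolynomial (Fin n) ℝ) :=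
  Submodule.span _ (Set.range (withOne g))

lemma mem_quadraticModule {f : MvPolynomial (Fin n) ℝ} : f ∈ quadraticModule g ↔ f ∈ QM g := by
  rw [quadraticModule, Submodule.mem_span_range_iff_exists_fun]
  constructor
  · rintro ⟨s, rfl⟩
    exact ⟨fun i => s i, fun i => isSOS_iff_isSumSq.2 (Subsemiring.mem_sumSq.1 (s i).2), rfl⟩
  · rintro ⟨s, hs, rfl⟩
    exact ⟨fun i => ⟨s i, Subsemiring.mem_sumSq.2 (isSOS_iff_isSumSq.1 (hs i))⟩, rfl⟩

lemma withOne_mem_quadraticModule (i : Fin (m + 1)) : withOne g i ∈ quadraticModule g :=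
  Submodule.subset_span (Set.mem_range_self i)

lemma one_mem_quadraticModule : 1 ∈ quadraticModule g :=
  withOne_mem_quadraticModule 0

lemma mem_quadraticModule_self (i : Fin m) : g i ∈ quadraticModule g :=
  withOne_mem_quadraticModule i.succ

theorem isArchimedeanQM_of_natCast_sub_sum_sq_mem {N : ℕ}
    (hN : (N : MvPolynomial (Fin n) ℝ) - ∑ i, X i ^ 2 ∈ quadraticModule g) :
    IsArchimedeanQM (QM g) := by
  have hX : Set.range X ⊆ (boundedSubalgebra (quadraticModule g) one_mem_quadraticModule :
      Set (MvPolynomial (Fin n) ℝ)) := by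
    rintro _ ⟨i, rfl⟩
    have h := (quadraticModule g).add_mem hN (isSumSq_mem one_mem_quadraticModule
      (.sum_sq (Finset.univ.erase i) X))
    rw [← Finset.add_sum_erase _ _ (Finset.mem_univ i)] at h
    exact ⟨N, by convert h using 1; ring⟩
  have htop := Algebra.adjoin_le hX
  rw [adjoin_range_X] at htop
  intro p
  simp only [← mem_quadraticModule]
  exact exists_natCast_sub_mem_of_mem_boundedSubalgebra (htop Algebra.mem_top)

lemma eval_withOne_nonneg {x : Fin n → ℝ} (hx : x ∈ SolSet g) (i : Fin (m + 1)) :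
    0 ≤ eval x (withOne g i) := by
  cases i using Fin.cases with
  | zero => simp [withOne]
  | succ i => exact hx i

lemma eval_nonneg_of_mem_QM {f : MvPolynomial (Fin n) ℝ} {x : Fin n → ℝ} (hf : f ∈ QM g)
    (hx : x ∈ SolSet g) : 0 ≤ eval x f := by
  obtain ⟨s, hs, rfl⟩ := hf
  rw [map_sum]
  refine Finset.sum_nonneg fun i _ => ?_
  rw [map_mul]
  refine mul_nonneg ?_ (eval_withOne_nonneg hx i)
  obtain ⟨l, q, hq⟩ := hs i
  simp only [hq, map_sum, map_pow]
  positivity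

theorem isCompact_solSet (hg : IsArchimedeanQM (QM g)) : IsCompact (SolSet g) := by
  obtain ⟨N, hN⟩ := hg (∑ i, X i ^ 2)
  have hclosed : IsClosed (SolSet g) := by
    simp only [SolSet, Set.ofPred_forall]
    exact isClosed_iInter fun i => isClosed_le continuous_const (continuous_eval (g i))
  refine (isCompact_univ_pi fun _ : Fin n => isCompact_Icc).of_isClosed_subset hclosed
    fun x hx i _ => abs_le.1 (Real.abs_le_sqrt (y := N) ?_)
  have hxN := eval_nonneg_of_mem_QM hN hx
  simp only [map_sub, map_natCast, map_sum, map_pow, eval_X, sub_nonneg] at hxN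
  exact (Finset.single_le_sum (fun j _ => sq_nonneg (x j)) (Finset.mem_univ i)).trans hxN

end QuadraticModule

lemma isCompact_convexHull {E : Type*} [AddCommGroup E] [Module ℝ E] [TopologicalSpace E]
    [IsTopologicalAddGroup E] [ContinuousSMul ℝ E] [FiniteDimensional ℝ E] {s : Set E}
    (hs : IsCompact s) : IsCompact (convexHull ℝ s) := by
  -- By Carathéodory, at most `finrank ℝ E + 1` points of `s` are needed.
  have hull_eq : convexHull ℝ s = ⋃ k ∈ Finset.range (Module.finrank ℝ E + 2),
      (fun p : (Fin k → ℝ) × (Fin k → E) => ∑ i, p.1 i • p.2 i) ''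
        (stdSimplex ℝ (Fin k) ×ˢ Set.univ.pi fun _ => s) := by
    refine subset_antisymm (fun x hx => ?_) (Set.iUnion₂_subset fun k _ => ?_)
    · obtain ⟨ι, _, z, w, hz, hind, hw, hw1, rfl⟩ := eq_pos_convex_span_of_mem_convexHull hx
      have hcard := hind.card_le_finrank_succ
      have hrank := Submodule.finrank_le (vectorSpan ℝ (Set.range z))
      let e := (Fintype.equivFin ι).symm
      refine Set.mem_iUnion₂.2 ⟨Fintype.card ι, Finset.mem_range.2 (by omega), (w ∘ e, z ∘ e),
        ⟨⟨fun i => (hw _).le, ?_⟩, fun i _ => hz (Set.mem_range_self _)⟩, ?_⟩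
      · exact (e.sum_comp w).trans hw1
      · exact e.sum_comp fun i => w i • z i
    · rintro _ ⟨⟨w, z⟩, ⟨⟨hw, hw1⟩, hz⟩, rfl⟩
      exact mem_convexHull_of_exists_fintype w z hw hw1 (fun i => hz i trivial) rfl
  rw [hull_eq]
  refine Finset.isCompact_biUnion _ fun k _ => ?_
  exact ((isCompact_stdSimplex ℝ (Fin k)).prod (isCompact_univ_pi fun _ => hs)).image (by fun_prop)

section Lasserre

variable {n m : ℕ} {g : Fin m → MvPolynomial (Fin n) ℝ} {d : ℕ}

lemma centerMass_mem_lasserre {ι : Type*} [Fintype ι] {w : ι → ℝ} (z : ι → Fin n → ℝ)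
    (hw : 0 < ∑ j, w j)
    (hpos : ∀ i, ∀ p : MvPolynomial (Fin n) ℝ, p.totalDegree ≤ d →
      0 ≤ ∑ j, w j * eval (z j) (p ^ 2 * withOne g i)) :
    Finset.univ.centerMass w z ∈ Lasserre d g := by
  let L : MvPolynomial (Fin n) ℝ →ₗ[ℝ] ℝ :=
    (∑ j, w j)⁻¹ • ∑ j, w j • (aeval (R := ℝ) (z j)).toLinearMap
  have L_apply (p : MvPolynomial (Fin n) ℝ) :
      L p = (∑ j, w j)⁻¹ * ∑ j, w j * eval (z j) p := by
    simp [L, aeval_eq_eval]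
  refine ⟨L ∘ₗ Submodule.subtype _, fun p hp => ?_, fun i p hp => ?_, ?_⟩
  · simp [hp, L_apply, hw.ne']
  · simp [hp, L_apply, Finset.centerMass]
  · rintro ⟨_, _⟩ ⟨N, p, hp, rfl⟩
    simp only [LinearMap.comp_apply, Submodule.subtype_apply, map_sum]
    refine Finset.sum_nonneg fun i _ => Finset.sum_nonneg fun j _ => ?_
    rw [L_apply]
    refine mul_nonneg (inv_nonneg.2 hw.le) (hpos i _ ?_)
    rcases hp i j with hzero | ⟨-, hdeg⟩
    · simp [hzero]
    · omega

lemma convexHull_solSet_subset_lasserre : convexHull ℝ (SolSet g) ⊆ Lasserre d g := by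
  intro x hx
  obtain ⟨ι, _, w, z, hw, hw1, hz, rfl⟩ := mem_convexHull_iff_exists_fintype.1 hx
  rw [← Finset.centerMass_eq_of_sum_1 _ _ hw1]
  refine centerMass_mem_lasserre z (hw1 ▸ one_pos) fun i p _ =>
    Finset.sum_nonneg fun j _ => mul_nonneg (hw j) ?_
  rw [map_mul, map_pow]
  exact mul_nonneg (sq_nonneg _) (eval_withOne_nonneg (hz j) i)

theorem closure_convexHull_solSet_subset_lasserre (hg : IsArchimedeanQM (QM g)) :
    closure (convexHull ℝ (SolSet g)) ⊆ Lasserre d g := by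
  rw [(isCompact_convexHull (isCompact_solSet hg)).isClosed.closure_eq]
  exact convexHull_solSet_subset_lasserre

end Lasserre

section Interpolation

open Asymptotics Filter Topology

-- Weighted Cauchy–Schwarz for the Lagrange interpolation formula `q t = ∑ v, q v * ℓᵥ t`.
lemma eval_sq_le_sum_basis_sq_div_mul_sum {s : Finset ℝ} {h : ℝ → ℝ} (hs : ∀ v ∈ s, 0 < h v)
    {q : Polynomial ℝ} (hq : q.degree < s.card) (t : ℝ) :
    q.eval t ^ 2 ≤ (∑ v ∈ s, (Lagrange.basis s id v).eval t ^ 2 / h v) *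
      ∑ v ∈ s, q.eval v ^ 2 * h v := by
  have interpolation : q.eval t = ∑ v ∈ s, q.eval v * (Lagrange.basis s id v).eval t := by
    conv_lhs => rw [Lagrange.eq_interpolate (s := s) (v := id) Function.injective_id.injOn hq]
    simp [Lagrange.interpolate_apply, Polynomial.eval_finsetSum]
  rw [interpolation]
  refine Finset.sum_sq_le_sum_mul_sum_of_sq_le_mul s
    (fun v hv => div_nonneg (sq_nonneg _) (hs v hv).le)
    (fun v hv => mul_nonneg (sq_nonneg _) (hs v hv).le) fun v hv => le_of_eq ?_
  have := (hs v hv).ne'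
  field_simp

-- The interpolation bound makes `μ = |h t| * K t` large enough for the second property, and it is
-- `o(t)`, hence small enough for the first.
lemma exists_add_mul_sum_neg_and_eval_sq_sum_nonneg {s : Finset ℝ} {h : ℝ → ℝ}
    (hs : ∀ v ∈ s, 0 < h v) (h0 : h =o[𝓝[<] 0] fun t => t) :
    ∃ t μ : ℝ, 0 ≤ μ ∧ t + μ * ∑ v ∈ s, v < 0 ∧ ∀ q : Polynomial ℝ, q.degree < s.card →
      0 ≤ q.eval t ^ 2 * h t + μ * ∑ v ∈ s, q.eval v ^ 2 * h v := by
  let K (t : ℝ) : ℝ := ∑ v ∈ s, (Lagrange.basis s id v).eval t ^ 2 / h v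
  have hK (t : ℝ) : 0 ≤ K t :=
    Finset.sum_nonneg fun v hv => div_nonneg (sq_nonneg _) (hs v hv).le
  have hKcont : Continuous fun t => K t * ∑ v ∈ s, v := by fun_prop
  have small : (fun t => |h t| * (K t * ∑ v ∈ s, v)) =o[𝓝[<] 0] fun t => t := by
    simpa only [mul_one] using h0.abs_left.mul_isBigO
      ((hKcont.continuousAt.isBigO_one ℝ).mono nhdsWithin_le_nhds)
  have bound := small.def (half_pos one_pos)
  obtain ⟨t, ht, ht0 : t < 0⟩ := (bound.and self_mem_nhdsWithin).exists
  refine ⟨t, |h t| * K t, mul_nonneg (abs_nonneg _) (hK t), ?_, fun q hq => ?_⟩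
  · rw [Real.norm_eq_abs, Real.norm_eq_abs, abs_of_neg ht0] at ht
    linarith [le_abs_self (|h t| * (K t * ∑ v ∈ s, v))]
  · calc
      0 ≤ q.eval t ^ 2 * (h t + |h t|) :=
        mul_nonneg (sq_nonneg _) (by linarith [neg_abs_le (h t)])
      _ = q.eval t ^ 2 * h t + |h t| * q.eval t ^ 2 := by ring
      _ ≤ q.eval t ^ 2 * h t + |h t| * (K t * ∑ v ∈ s, q.eval v ^ 2 * h v) := by
        gcongr
        exact eval_sq_le_sum_basis_sq_div_mul_sum hs hq t
      _ = _ := by ring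

lemma exists_natDegree_le_totalDegree_eval_line {σ : Type*} (a b : σ → ℝ)
    (p : MvPolynomial σ ℝ) : ∃ q : Polynomial ℝ, q.natDegree ≤ p.totalDegree ∧
      ∀ t, q.eval t = eval (a + t • b) p := by
  let line (i : σ) : Polynomial ℝ := .C (b i) * .X + .C (a i)
  refine ⟨aeval line p, ?_, fun t => ?_⟩
  · simpa only [mul_one] using
      aeval_natDegree_le p le_rfl line fun i => Polynomial.natDegree_linear_le
  · rw [← Polynomial.coe_aeval_eq_eval, comp_aeval_apply, aeval_eq_eval]
    congr 2
    ext i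
    simp only [Polynomial.coe_aeval_eq_eval, Polynomial.eval_add, Polynomial.eval_mul,
      Polynomial.eval_C, Polynomial.eval_X, Pi.add_apply, Pi.smul_apply, smul_eq_mul, line]
    ring

lemma centerMass_line {ι E : Type*} [AddCommGroup E] [Module ℝ E] {s : Finset ι} {w : ι → ℝ}
    (hw : ∑ i ∈ s, w i ≠ 0) (τ : ι → ℝ) (a b : E) :
    s.centerMass w (fun i => a + τ i • b) = a + s.centerMass w τ • b := by
  simp only [Finset.centerMass, smul_add, Finset.sum_add_distrib, ← Finset.sum_smul, smul_smul,
    inv_mul_cancel₀ hw, one_smul, smul_eq_mul]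

-- The point is the barycentre of a large mass at `a + t • b`, for a small `t < 0`, and of small
-- masses at points of the line where `g k` is positive, which make up for `g k` at `a + t • b`.
theorem exists_neg_add_smul_mem_lasserre {n m : ℕ} {g : Fin m → MvPolynomial (Fin n) ℝ}
    (a b : Fin n → ℝ) (k : Fin m)
    (hzero : (fun t : ℝ => eval (a + t • b) (g k)) =o[𝓝[<] 0] fun t => t)
    (hpos : {t : ℝ | 0 < eval (a + t • b) (g k)}.Infinite)
    (hother : ∀ i ≠ k, ∀ t : ℝ, 0 ≤ eval (a + t • b) (g i)) (d : ℕ) :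
    ∃ t : ℝ, t < 0 ∧ a + t • b ∈ Lasserre d g := by
  obtain ⟨s, hs, hcard⟩ := hpos.exists_subset_card_eq (d + 1)
  obtain ⟨t, μ, hμ, hneg, hsum⟩ := exists_add_mul_sum_neg_and_eval_sq_sum_nonneg hs hzero
  let w : Option s → ℝ := fun o => o.elim 1 fun _ => μ
  let τ : Option s → ℝ := fun o => o.elim t (↑)
  have hw (o) : 0 ≤ w o := by cases o <;> simp [w, hμ]
  have hW : 0 < ∑ o, w o := by
    rw [Fintype.sum_option]
    exact add_pos_of_pos_of_nonneg one_pos (Finset.sum_nonneg fun v _ => hw (some v))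
  refine ⟨Finset.univ.centerMass w τ, ?_,
    centerMass_line hW.ne' τ a b ▸ centerMass_mem_lasserre _ hW fun i p hp => ?_⟩
  · refine mul_neg_of_pos_of_neg (inv_pos.2 hW) ?_
    simpa [w, τ, Fintype.sum_option, ← Finset.mul_sum, Finset.univ_eq_attach,
      Finset.sum_attach s fun v => v] using hneg
  · cases i using Fin.cases with
    | zero =>
      exact Finset.sum_nonneg fun o _ => mul_nonneg (hw o) (by simp [withOne, sq_nonneg])
    | succ i =>
      simp only [withOne, Fin.cons_succ, map_mul, map_pow]
      by_cases hik : i = k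
      · subst hik
        obtain ⟨q, hq_deg, hq⟩ := exists_natDegree_le_totalDegree_eval_line a b p
        have hqs : q.degree < s.card :=
          Polynomial.degree_le_natDegree.trans_lt (by exact_mod_cast (by omega))
        simpa [w, τ, Fintype.sum_option, ← Finset.mul_sum, hq, Finset.univ_eq_attach,
          Finset.sum_attach s fun v => eval (a + v • b) p ^ 2 * eval (a + v • b) (g i)]
          using hsum q hqs
      · exact Finset.sum_nonneg fun o _ =>
          mul_nonneg (hw o) (mul_nonneg (sq_nonneg _) (hother i hik _))

end Interpolation

section Quasiconcavity

variable {n : ℕ} (p q : MvPolynomial (Fin n) ℝ) (x : Fin n → ℝ)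

lemma gradEval_mul :
    gradEval (p * q) x = eval x p • gradEval q x + eval x q • gradEval p x := by
  ext i
  simp [gradEval, Derivation.leibniz]

lemma hessEval_mul :
    hessEval (p * q) x = eval x p • hessEval q x + eval x q • hessEval p x +
      vecMulVec (gradEval p x) (gradEval q x) + vecMulVec (gradEval q x) (gradEval p x) := by
  ext i j
  simp only [hessEval, Derivation.leibniz, smul_eq_mul, map_add, map_mul, of_apply, smul_of,
    of_add_of, Matrix.add_apply, Pi.add_apply, Pi.smul_apply, vecMulVec_apply, gradEval]
  ring

variable {p q x}

-- On `Z(p)` the gradients of `p * q` and `p` are parallel, and orthogonally to them the mixed term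
-- of the Hessian of `p * q` vanishes.
theorem StrictlyQuasiconcaveAt.mul_of_eval_eq_zero (hp : StrictlyQuasiconcaveAt p x)
    (hpx : eval x p = 0) (hqx : 0 < eval x q) : StrictlyQuasiconcaveAt (p * q) x := by
  intro v hv hgrad
  have hgrad_p : gradEval p x ⬝ᵥ v = 0 := by
    simpa [gradEval_mul, hpx, hqx.ne'] using hgrad
  simpa [hessEval_mul, hpx, add_mulVec, smul_mulVec, vecMulVec_mulVec, hgrad_p,
    dotProduct_comm v (gradEval p x)] using mul_neg_of_pos_of_neg hqx (hp v hv hgrad_p)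

/-- The polynomial `r - ‖X - c‖ ^ 2`, which is nonnegative exactly on the Euclidean ball with
center `c` and squared radius `r`. -/
def ballPoly (c : Fin n → ℝ) (r : ℝ) : MvPolynomial (Fin n) ℝ :=
  C r - ∑ i, (X i - C (c i)) ^ 2

lemma eval_ballPoly (c : Fin n → ℝ) (r : ℝ) (x : Fin n → ℝ) :
    eval x (ballPoly c r) = r - ∑ i, (x i - c i) ^ 2 := by
  simp [ballPoly]

lemma hessEval_ballPoly (c : Fin n → ℝ) (r : ℝ) (x : Fin n → ℝ) :
    hessEval (ballPoly c r) x = (-2 : ℝ) • 1 := by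
  ext i j
  have hgrad : pderiv j (ballPoly c r) = C (-2) * (X j - C (c j)) := by
    simp [ballPoly, Derivation.leibniz_pow, pderiv_X, Pi.single_apply, map_ofNat C 2]
  simp [hessEval, hgrad, pderiv_X, Pi.single_apply, Matrix.one_apply, apply_ite, eq_comm]

lemma strictlyQuasiconcaveAt_ballPoly (c : Fin n → ℝ) (r : ℝ) (x : Fin n → ℝ) :
    StrictlyQuasiconcaveAt (ballPoly c r) x := by
  intro v hv _
  have hv_pos : 0 < v ⬝ᵥ v := by simpa using dotProduct_star_self_pos_iff.2 hv
  rw [hessEval_ballPoly, smul_mulVec, one_mulVec, dotProduct_smul, smul_eq_mul]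
  linarith

end Quasiconcavity

section TwoDisks

open Asymptotics Filter Topology

/-- The polynomial `g₁` of the example. Its nonnegativity set is the disjoint union of the closed
disks of radius `1` around `(0, 0)` and of radius `2` around `(4, 0)`. -/
def twoDisksPoly : MvPolynomial (Fin 2) ℝ :=
  -(ballPoly ![0, 0] 1 * ballPoly ![4, 0] 4)

/-- The tuple `(g₁, g₂)` of the example, cutting the two disks with the half-plane `y ≤ 1`. -/
def cutTwoDisks : Fin 2 → MvPolynomial (Fin 2) ℝ :=
  ![twoDisksPoly, 1 - X 1]

lemma twoDisksPoly_eq :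
    twoDisksPoly = -((1 - X 0 ^ 2 - X 1 ^ 2) * (4 - (X 0 - 4) ^ 2 - X 1 ^ 2)) := by
  simp [twoDisksPoly, ballPoly, Fin.sum_univ_two, sub_sub, map_ofNat C 4]

lemma eval_ballPoly_two (a b r : ℝ) (x : Fin 2 → ℝ) :
    eval x (ballPoly ![a, b] r) = r - ((x 0 - a) ^ 2 + (x 1 - b) ^ 2) := by
  simp [eval_ballPoly, Fin.sum_univ_two]

lemma eval_right_disk_neg_of_left_disk_nonneg {x : Fin 2 → ℝ}
    (hx : 0 ≤ eval x (ballPoly ![0, 0] 1)) : eval x (ballPoly ![4, 0] 4) < 0 := by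
  rw [eval_ballPoly_two] at *
  nlinarith

lemma strictlyQuasiconcaveAt_twoDisksPoly {x : Fin 2 → ℝ} (hx : x ∈ ZSet twoDisksPoly) :
    StrictlyQuasiconcaveAt twoDisksPoly x := by
  have hzero : eval x (ballPoly ![0, 0] 1) = 0 ∨ eval x (ballPoly ![4, 0] 4) = 0 := by
    simpa [ZSet, twoDisksPoly] using hx
  rcases hzero with hleft | hright
  · rw [twoDisksPoly, ← mul_neg]
    refine (strictlyQuasiconcaveAt_ballPoly _ _ x).mul_of_eval_eq_zero hleft ?_
    rw [map_neg, neg_pos]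
    exact eval_right_disk_neg_of_left_disk_nonneg hleft.ge
  · rw [twoDisksPoly, mul_comm, ← mul_neg]
    refine (strictlyQuasiconcaveAt_ballPoly _ _ x).mul_of_eval_eq_zero hright ?_
    rw [map_neg, neg_pos]
    by_contra! hleft
    exact (eval_right_disk_neg_of_left_disk_nonneg hleft).ne hright

lemma isArchimedeanQM_cutTwoDisks : IsArchimedeanQM (QM cutTwoDisks) := by
  apply isArchimedeanQM_of_natCast_sub_sum_sq_mem (N := 100)
  have hsos : IsSumSq ((X 0 ^ 2 + X 1 ^ 2 - 4 * X 0 - 4) ^ 2 + 2 * (X 0 - 6) ^ 2 +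
      18 * X 1 ^ 2 : MvPolynomial (Fin 2) ℝ) :=
    .add (.add (IsSquare.sq _).isSumSq (.mul (.natCast 2) (IsSquare.sq _).isSumSq))
      (.mul (.natCast 18) (IsSquare.sq _).isSumSq)
  have h := (quadraticModule cutTwoDisks).add_mem (isSumSq_mem one_mem_quadraticModule hsos)
    (mem_quadraticModule_self 0)
  convert h using 1
  simp only [cutTwoDisks, twoDisksPoly_eq, cons_val_zero, Fin.sum_univ_two]
  push_cast
  ring

lemma le_one_and_left_disk_or_two_le_of_mem_solSet {x : Fin 2 → ℝ} (hx : x ∈ SolSet cutTwoDisks) :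
    x 1 ≤ 1 ∧ (x 0 ^ 2 + x 1 ^ 2 ≤ 1 ∨ 2 ≤ x 0) := by
  have hprod : eval x (ballPoly ![0, 0] 1) * eval x (ballPoly ![4, 0] 4) ≤ 0 := by
    simpa [cutTwoDisks, twoDisksPoly] using hx 0
  refine ⟨by simpa [cutTwoDisks] using hx 1, ?_⟩
  simp only [eval_ballPoly_two] at hprod
  by_contra! hout
  have hright := nonneg_of_mul_nonpos_right hprod (by linarith [hout.1])
  nlinarith

-- The half-planes below are bounded by the tangents of the unit circle at the points
-- `(-2t, 1 - t²) / (1 + t²)`.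
lemma tangent_le_of_mem_closure_convexHull_cutTwoDisks {x : Fin 2 → ℝ}
    (hx : x ∈ closure (convexHull ℝ (SolSet cutTwoDisks))) {t : ℝ} (ht0 : 0 ≤ t) (ht1 : t ≤ 1) :
    (-2 * t) * x 0 + (1 - t ^ 2) * x 1 ≤ 1 + t ^ 2 := by
  let f : (Fin 2 → ℝ) →ₗ[ℝ] ℝ := (-2 * t) • .proj 0 + (1 - t ^ 2) • .proj 1
  have hclosed : IsClosed {x | f x ≤ 1 + t ^ 2} :=
    isClosed_le f.continuous_of_finiteDimensional continuous_const
  have hsol : SolSet cutTwoDisks ⊆ {x | f x ≤ 1 + t ^ 2} := fun z hz => by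
    change (-2 * t) * z 0 + (1 - t ^ 2) * z 1 ≤ 1 + t ^ 2
    obtain ⟨hz1, hleft | hright⟩ := le_one_and_left_disk_or_two_le_of_mem_solSet hz
    · refine le_of_sq_le_sq ?_ (by positivity)
      calc
        _ = (1 + t ^ 2) ^ 2 * (z 0 ^ 2 + z 1 ^ 2) - ((1 - t ^ 2) * z 0 + 2 * t * z 1) ^ 2 := by
          ring
        _ ≤ (1 + t ^ 2) ^ 2 * (z 0 ^ 2 + z 1 ^ 2) := sub_le_self _ (sq_nonneg _)
        _ ≤ (1 + t ^ 2) ^ 2 := mul_le_of_le_one_right (sq_nonneg _) hleft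
    · calc
        (-2 * t) * z 0 + (1 - t ^ 2) * z 1 ≤ 0 + (1 - t ^ 2) * 1 := by
          gcongr
          · nlinarith
          · nlinarith
        _ ≤ 1 + t ^ 2 := by linarith [sq_nonneg t]
  exact closure_minimal (convexHull_min hsol (convex_halfSpace_le f.isLinear _)) hclosed hx

lemma nonneg_of_mem_closure_convexHull_cutTwoDisks {x : Fin 2 → ℝ}
    (hx : x ∈ closure (convexHull ℝ (SolSet cutTwoDisks))) (hx1 : x 1 = 1) : 0 ≤ x 0 := by
  by_contra! hneg
  have htangent := tangent_le_of_mem_closure_convexHull_cutTwoDisks hx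
    (t := min 1 (-x 0 / 2)) (le_min zero_le_one (by linarith)) (min_le_left _ _)
  rw [hx1] at htangent
  have : 0 < min 1 (-x 0 / 2) := lt_min one_pos (by linarith)
  nlinarith [min_le_right 1 (-x 0 / 2)]

lemma exists_mem_lasserre_cutTwoDisks (d : ℕ) :
    ∃ x ∈ Lasserre d cutTwoDisks, x 1 = 1 ∧ x 0 < 0 := by
  have hline (t : ℝ) :
      eval (![0, 1] + t • ![1, 0]) twoDisksPoly = t ^ 2 * (3 - (t - 4) ^ 2) := by
    simp only [twoDisksPoly, map_neg, map_mul, eval_ballPoly_two, Pi.add_apply, Pi.smul_apply,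
      smul_eq_mul, cons_val_zero, cons_val_one]
    ring
  have hzero : (fun t : ℝ => eval (![0, 1] + t • ![1, 0]) twoDisksPoly) =o[𝓝[<] 0] fun t => t := by
    have hlim : Tendsto (fun t : ℝ => t * (3 - (t - 4) ^ 2)) (𝓝[<] 0) (𝓝 0) :=
      (Continuous.tendsto' (by fun_prop) 0 0 (by simp)).mono_left nhdsWithin_le_nhds
    simpa only [hline, sq, mul_assoc, mul_one] using
      (isBigO_refl (fun t : ℝ => t) _).mul_isLittleO ((isLittleO_one_iff ℝ).2 hlim)
  have hpos : {t : ℝ | 0 < eval (![0, 1] + t • ![1, 0]) twoDisksPoly}.Infinite := by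
    refine (Set.Ioo_infinite (by norm_num : (3 : ℝ) < 5)).mono fun t ht => ?_
    simp only [Set.mem_ofPred_eq, hline]
    exact mul_pos (pow_pos (by linarith [ht.1]) 2) (by nlinarith [ht.1, ht.2])
  have hother : ∀ i ≠ 0, ∀ t : ℝ, 0 ≤ eval (![0, 1] + t • ![1, 0]) (cutTwoDisks i) := by
    intro i hi t
    simp [Fin.eq_one_of_ne_zero i hi, cutTwoDisks]
  obtain ⟨t, ht, hmem⟩ := exists_neg_add_smul_mem_lasserre (g := cutTwoDisks) ![0, 1] ![1, 0] 0
    hzero hpos hother d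
  exact ⟨_, hmem, by simp, by simpa using ht⟩

end TwoDisks

theorem stmt_16 :
    ∀ (g₁ g₂ : MvPolynomial (Fin 2) ℝ),
      g₁ = -((1 - X 0 ^ 2 - X 1 ^ 2) * (4 - (X 0 - 4) ^ 2 - X 1 ^ 2)) →
      g₂ = 1 - X 1 →
      ∀ g : Fin 2 → MvPolynomial (Fin 2) ℝ, g = ![g₁, g₂] →
        IsArchimedeanQM (QM g) ∧
        (∀ x ∈ SolSet g ∩ ZSet g₁, StrictlyQuasiconcaveAt g₁ x) ∧
        ∀ d : ℕ, closure (convexHull ℝ (SolSet g)) ⊂ Lasserre d g := by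
  rintro _ _ rfl rfl _ rfl
  rw [← twoDisksPoly_eq]
  refine ⟨isArchimedeanQM_cutTwoDisks, fun x hx => strictlyQuasiconcaveAt_twoDisksPoly hx.2,
    fun d => ⟨closure_convexHull_solSet_subset_lasserre isArchimedeanQM_cutTwoDisks, ?_⟩⟩
  obtain ⟨x, hx, hx1, hx0⟩ := exists_mem_lasserre_cutTwoDisks d
  exact fun hsubset => hx0.not_ge (nonneg_of_mem_closure_convexHull_cutTwoDisks (hsubset hx) hx1)
end
end
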